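/- arXiv:math/0311449 — 5 statements merged into one kernel-verified Lean document; each statement's English description precedes it below -/
import Mathlib

section
/- Let k ≥ 3 be an integer, let t = 2k-1 and r = C(k,2) - 1. Let G be a graph, let F be a family of pairwise edge-disjoint copies of K_t in G, and let A be the set of edges of G not contained in any member of F. Suppose that to each e ∈ A one can associate an r-element subset S(e) of F such that (i) S(e) ∩ S(e') = ∅ whenever e ≠ e' are edges of A, and (ii) one can choose one edge f_H from each member H of S(e) so that the r chosen edges together with e form the edge set of a copy of K_k in G. Then G has an F_k-decomposition, where F_k = {K_k, K_{2k-1}, K_{2k-1}⁻}. -/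
/-- `c` is a copy of `H` in `G`, i.e. a subgraph of `G` isomorphic to `H`. -/
def SimpleGraph.Subgraph.IsCopy {α β : Type*} {G : SimpleGraph α} (c : G.Subgraph)
    (H : SimpleGraph β) : Prop :=
  Nonempty (c.coe ≃g H)

/-!
The selected edges of the copies of `K_t` are rerouted: the copy of `K_k` built from an uncovered
edge `e` takes one edge from each member of `S e`. Since the sets `S e` are disjoint and so are the
members of `F`, these copies of `K_k` are edge-disjoint, and together they use at most one edge of
each member of `F`. Deleting the edges they use turns every member of `F` into a `K_t` or a `K_t⁻`,
and no edge is lost.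
-/

section Transversal

variable {ι α : Type*} {E : ι → Set α} {F : Set ι} {A : Set α} {S : α → Set ι} {f : α → ι → α}

theorem mem_and_eq_of_mem_insert_image (hE : F.PairwiseDisjoint E) {T : Set ι} (hT : T ⊆ F)
    {g : ι → α} (hg : ∀ i ∈ T, g i ∈ E i) {a x : α} (ha : ∀ i ∈ F, a ∉ E i) {i : ι} (hi : i ∈ F)
    (hx : x ∈ insert a (g '' T)) (hxi : x ∈ E i) : i ∈ T ∧ x = g i := by
  rcases hx with rfl | ⟨j, hj, rfl⟩
  · exact absurd hxi (ha i hi)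
  · obtain rfl : j = i := hE.elim_set (hT hj) hi _ (hg j hj) hxi
    exact ⟨hj, rfl⟩

theorem pairwiseDisjoint_insert_image (hE : F.PairwiseDisjoint E)
    (hA : ∀ a ∈ A, ∀ i ∈ F, a ∉ E i) (hSF : ∀ a ∈ A, S a ⊆ F) (hS : A.PairwiseDisjoint S)
    (hf : ∀ a ∈ A, ∀ i ∈ S a, f a i ∈ E i) :
    A.PairwiseDisjoint fun a => insert a (f a '' S a) := by
  intro a ha b hb hab
  refine Set.disjoint_left.2 fun x hxa hxb => hab ?_
  rcases hxa with rfl | ⟨i, hi, rfl⟩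
  · rcases hxb with rfl | ⟨j, hj, rfl⟩
    · rfl
    · exact absurd (hf b hb j hj) (hA _ ha j (hSF b hb hj))
  · have hib : i ∈ S b :=
      (mem_and_eq_of_mem_insert_image hE (hSF b hb) (hf b hb) (hA b hb) (hSF a ha hi) hxb
        (hf a ha i hi)).1
    exact hS.elim_set ha hb i hi hib

theorem subsingleton_inter_biUnion_insert_image (hE : F.PairwiseDisjoint E)
    (hA : ∀ a ∈ A, ∀ i ∈ F, a ∉ E i) (hSF : ∀ a ∈ A, S a ⊆ F) (hS : A.PairwiseDisjoint S)
    (hf : ∀ a ∈ A, ∀ i ∈ S a, f a i ∈ E i) {i : ι} (hi : i ∈ F) :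
    (E i ∩ ⋃ a ∈ A, insert a (f a '' S a)).Subsingleton := by
  rintro x ⟨hxi, hx⟩ y ⟨hyi, hy⟩
  obtain ⟨a, ha, hxa⟩ := Set.mem_iUnion₂.1 hx
  obtain ⟨b, hb, hyb⟩ := Set.mem_iUnion₂.1 hy
  obtain ⟨hia, rfl⟩ :=
    mem_and_eq_of_mem_insert_image hE (hSF a ha) (hf a ha) (hA a ha) hi hxa hxi
  obtain ⟨hib, rfl⟩ :=
    mem_and_eq_of_mem_insert_image hE (hSF b hb) (hf b hb) (hA b hb) hi hyb hyi
  rw [hS.elim_set ha hb i hia hib]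

end Transversal

section EdgeTransitive

variable {V W : Type*} {G : SimpleGraph V} {K : SimpleGraph W}

/-- A graph is edge-transitive if its automorphism group acts transitively on its (unoriented)
edges. For such a graph `K`, the graph `K` minus an edge is well defined up to isomorphism. -/
def IsEdgeTransitive (K : SimpleGraph W) : Prop :=
  ∀ e ∈ K.edgeSet, ∀ e' ∈ K.edgeSet, ∃ σ : K ≃g K, e.map σ = e'

theorem isEdgeTransitive_top : IsEdgeTransitive (⊤ : SimpleGraph W) := by
  intro e he e' he'
  induction e with | _ a b
  induction e' with | _ c d
  obtain ⟨σ, hac, hbd⟩ := MulAction.is_two_pretransitive_iff.1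
    (Equiv.Perm.isMultiplyPretransitive W 2) (SimpleGraph.top_adj _ _ |>.1 he)
    (SimpleGraph.top_adj _ _ |>.1 he')
  exact ⟨SimpleGraph.Iso.completeGraph σ, congrArg₂ Sym2.mk hac hbd⟩

/-- An isomorphism `φ : G ≃g K`, restricted to `G` minus the edges in `s` and `K` minus their
images. -/
def deleteEdgesIso (φ : G ≃g K) (s : Set (Sym2 V)) :
    G.deleteEdges s ≃g K.deleteEdges (Sym2.map φ '' s) where
  toEquiv := φ.toEquiv
  map_rel_iff' {a b} := by
    have hmem : s(φ a, φ b) ∈ Sym2.map φ '' s ↔ s(a, b) ∈ s :=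
      (Sym2.map.injective φ.injective).mem_set_image (a := s(a, b))
    simp only [SimpleGraph.deleteEdges_adj, RelIso.coe_fn_toEquiv, φ.map_adj_iff, hmem]

theorem isCopy_deleteEdges_singleton (hK : IsEdgeTransitive K) {c : G.Subgraph} (hc : c.IsCopy K)
    {x : Sym2 V} (hx : x ∈ c.edgeSet) {e : Sym2 W} (he : e ∈ K.edgeSet) :
    (c.deleteEdges {x}).IsCopy (K.deleteEdges {e}) := by
  obtain ⟨φ⟩ := hc
  rw [← c.image_coe_edgeSet_coe] at hx
  obtain ⟨y, hy, rfl⟩ := hx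
  obtain ⟨σ, rfl⟩ := hK (y.map φ) (φ.mapEdgeSet ⟨y, hy⟩).2 e he
  have hcoe : (c.deleteEdges {y.map (↑)}).coe = c.coe.deleteEdges {y} := by
    rw [c.deleteEdges_coe_eq, Set.image_singleton]
  rw [SimpleGraph.Subgraph.IsCopy, hcoe]
  have ψ := (deleteEdgesIso φ {y}).trans (deleteEdgesIso σ (Sym2.map φ '' {y}))
  rw [Set.image_singleton, Set.image_singleton] at ψ
  exact ⟨ψ⟩

theorem isCopy_or_isCopy_deleteEdges_singleton (hK : IsEdgeTransitive K) {c : G.Subgraph}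
    (hc : c.IsCopy K) {s : Set (Sym2 V)} (hs : (c.edgeSet ∩ s).Subsingleton) {e : Sym2 W}
    (he : e ∈ K.edgeSet) :
    (c.deleteEdges s).IsCopy K ∨ (c.deleteEdges s).IsCopy (K.deleteEdges {e}) := by
  rw [← c.deleteEdges_inter_edgeSet_left_eq]
  rcases hs.eq_empty_or_singleton with hempty | ⟨x, hsingle⟩
  · left
    rwa [hempty, c.deleteEdges_empty_eq]
  · right
    have hx : x ∈ c.edgeSet ∩ s := hsingle ▸ Set.mem_singleton x
    rw [hsingle]
    exact isCopy_deleteEdges_singleton hK hc hx.1 he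

end EdgeTransitive

section Decomposition

variable {V : Type*} {G : SimpleGraph V}

/-- A set `L` of subgraphs decomposes `G` if every edge of `G` lies in precisely one member
of `L`. -/
def IsEdgeDecomposition (L : Set G.Subgraph) : Prop :=
  ∀ e ∈ G.edgeSet, ∃! c, c ∈ L ∧ e ∈ c.edgeSet

theorem isEdgeDecomposition_of_pairwiseDisjoint {L : Set G.Subgraph}
    (hL : L.PairwiseDisjoint SimpleGraph.Subgraph.edgeSet)
    (hcover : ∀ e ∈ G.edgeSet, ∃ c ∈ L, e ∈ c.edgeSet) : IsEdgeDecomposition L := fun e he =>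
  existsUnique_of_exists_of_unique (hcover e he)
    fun _ _ hc hd => hL.elim_set hc.1 hd.1 e hc.2 hd.2

theorem subgraph_edgeSet_deleteEdges (c : G.Subgraph) (s : Set (Sym2 V)) :
    (c.deleteEdges s).edgeSet = c.edgeSet \ s := by
  ext ⟨a, b⟩
  exact SimpleGraph.Subgraph.deleteEdges_adj s a b

theorem isEdgeDecomposition_union_image_deleteEdges {C F : Set G.Subgraph}
    (hC : C.PairwiseDisjoint SimpleGraph.Subgraph.edgeSet)
    (hF : F.PairwiseDisjoint SimpleGraph.Subgraph.edgeSet)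
    (hcover : ∀ e ∈ G.edgeSet, ∃ c ∈ C ∪ F, e ∈ c.edgeSet) :
    IsEdgeDecomposition (C ∪ (fun c => c.deleteEdges (sSup C).edgeSet) '' F) := by
  apply isEdgeDecomposition_of_pairwiseDisjoint
  · refine Set.pairwiseDisjoint_union.2
      ⟨hC, hF.image_of_le fun c => SimpleGraph.Subgraph.edgeSet_mono (c.deleteEdges_le _), ?_⟩
    rintro c hc _ ⟨d, -, rfl⟩ -
    rw [subgraph_edgeSet_deleteEdges]
    exact Set.disjoint_sdiff_right.mono_left (SimpleGraph.Subgraph.edgeSet_mono (le_sSup hc))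
  · intro e he
    by_cases heC : e ∈ (sSup C).edgeSet
    · rw [SimpleGraph.Subgraph.edgeSet_sSup] at heC
      obtain ⟨c, hc, hec⟩ := Set.mem_iUnion₂.1 heC
      exact ⟨c, .inl hc, hec⟩
    · obtain ⟨c, hc | hc, hec⟩ := hcover e he
      · exact ⟨c, .inl hc, hec⟩
      · exact ⟨_, .inr ⟨c, hc, rfl⟩, (subgraph_edgeSet_deleteEdges c _).symm ▸ ⟨hec, heC⟩⟩

end Decomposition

theorem Fk_decomposition_of_good_assignment_general {V U W : Type*} {G : SimpleGraph V}
    {H : SimpleGraph U} {K : SimpleGraph W} (hK : IsEdgeTransitive K) {e₀ : Sym2 W}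
    (he₀ : e₀ ∈ K.edgeSet) {F : Set G.Subgraph} (hF : ∀ c ∈ F, c.IsCopy K)
    (hFdisj : F.PairwiseDisjoint SimpleGraph.Subgraph.edgeSet)
    {A : Set (Sym2 V)} (hA : A = {e ∈ G.edgeSet | ∀ c ∈ F, e ∉ c.edgeSet})
    {S : Sym2 V → Set G.Subgraph} (hSF : ∀ e ∈ A, S e ⊆ F) (hSdisj : A.PairwiseDisjoint S)
    (hSgood : ∀ e ∈ A, ∃ f : G.Subgraph → Sym2 V, (∀ c ∈ S e, f c ∈ c.edgeSet) ∧
      ∃ c : G.Subgraph, c.IsCopy H ∧ c.edgeSet = insert e (f '' S e)) :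
    ∃ L : Set G.Subgraph,
      (∀ c ∈ L, c.IsCopy H ∨ c.IsCopy K ∨ c.IsCopy (K.deleteEdges {e₀})) ∧
      IsEdgeDecomposition L := by
  choose! f hf C hCH hC using hSgood
  have hAF : ∀ e ∈ A, ∀ c ∈ F, e ∉ c.edgeSet := fun e he => (hA ▸ he).2
  have hCdisj : (C '' A).PairwiseDisjoint SimpleGraph.Subgraph.edgeSet := by
    rintro _ ⟨a, ha, rfl⟩ _ ⟨b, hb, rfl⟩ hab
    simpa only [Function.onFun, hC a ha, hC b hb] using
      pairwiseDisjoint_insert_image hFdisj hAF hSF hSdisj hf ha hb (ne_of_apply_ne C hab)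
  have hCedges : (sSup (C '' A)).edgeSet = ⋃ e ∈ A, insert e (f e '' S e) := by
    rw [SimpleGraph.Subgraph.edgeSet_sSup, Set.biUnion_image]
    exact Set.iUnion₂_congr hC
  have hcover : ∀ e ∈ G.edgeSet, ∃ c ∈ C '' A ∪ F, e ∈ c.edgeSet := by
    intro e he
    by_cases heF : ∃ c ∈ F, e ∈ c.edgeSet
    · exact heF.imp fun c hc => ⟨.inr hc.1, hc.2⟩
    · have heA : e ∈ A := hA ▸ ⟨he, fun c hc hec => heF ⟨c, hc, hec⟩⟩
      exact ⟨C e, .inl ⟨e, heA, rfl⟩, hC e heA ▸ Set.mem_insert e _⟩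
  refine ⟨_, ?_, isEdgeDecomposition_union_image_deleteEdges hCdisj hFdisj hcover⟩
  rintro _ (⟨e, he, rfl⟩ | ⟨c, hc, rfl⟩)
  · exact .inl (hCH e he)
  · refine .inr (isCopy_or_isCopy_deleteEdges_singleton hK (hF c hc) ?_ he₀)
    rw [hCedges]
    exact subsingleton_inter_biUnion_insert_image hFdisj hAF hSF hSdisj hf hc

/-- Let `k ≥ 3`, `t = 2k-1`, `r = C(k,2)-1`. Let `G` be a graph, `F` a family of pairwise
edge-disjoint copies of `K_t` in `G`, and `A` the set of edges of `G` not contained in any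
member of `F`. Suppose each `e ∈ A` has an `r`-element subset `S e` of `F` such that the
`S e` are pairwise disjoint, and one can pick one edge from each member of `S e` so that these
`r` edges together with `e` form the edge set of a copy of `K_k` in `G`. Then `G` has an
`F_k`-decomposition, where `F_k = {K_k, K_{2k-1}, K_{2k-1}⁻}`. -/
theorem Fk_decomposition_of_good_assignment {V : Type*} [Fintype V]
    (k : ℕ) (hk : 3 ≤ k) (G : SimpleGraph V)
    (F : Set G.Subgraph)
    (hF : ∀ c ∈ F, c.IsCopy (⊤ : SimpleGraph (Fin (2 * k - 1))))
    (hFdisj : F.Pairwise fun c d => Disjoint c.edgeSet d.edgeSet)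
    (A : Set (Sym2 V)) (hA : A = {e ∈ G.edgeSet | ∀ c ∈ F, e ∉ c.edgeSet})
    (S : Sym2 V → Finset G.Subgraph)
    (hSsub : ∀ e ∈ A, (S e : Set G.Subgraph) ⊆ F)
    (hScard : ∀ e ∈ A, (S e).card = k * (k - 1) / 2 - 1)
    (hSdisj : ∀ e ∈ A, ∀ e' ∈ A, e ≠ e' → Disjoint (S e) (S e'))
    (hSgood : ∀ e ∈ A, ∃ f : G.Subgraph → Sym2 V,
      (∀ c ∈ S e, f c ∈ c.edgeSet) ∧
      ∃ c : G.Subgraph, c.IsCopy (⊤ : SimpleGraph (Fin k)) ∧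
        c.edgeSet = insert e (f '' (S e : Set G.Subgraph))) :
    ∃ L : Set G.Subgraph,
      (∀ c ∈ L, c.IsCopy (⊤ : SimpleGraph (Fin k)) ∨
        c.IsCopy (⊤ : SimpleGraph (Fin (2 * k - 1))) ∨
        c.IsCopy ((⊤ : SimpleGraph (Fin (2 * k - 1))).deleteEdges
          {s((⟨0, by omega⟩ : Fin (2 * k - 1)), (⟨1, by omega⟩ : Fin (2 * k - 1)))})) ∧
      ∀ e ∈ G.edgeSet, ∃! c, c ∈ L ∧ e ∈ c.edgeSet :=
  Fk_decomposition_of_good_assignment_general isEdgeTransitive_top (by simp) hF hFdisj hA hSsub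
    (fun e he e' he' hne => Finset.disjoint_coe.2 (hSdisj e he e' he' hne)) hSgood
end

section
/- Let t ≥ 2 be an integer and let 0 ≤ γ with 1 - tγ ≥ 0. If G* is a graph with n* vertices and minimum degree at least n*(1-γ), then for every edge e of G*, the number of t-element vertex subsets of G* containing both endpoints of e whose induced subgraph is a complete graph K_t is at least C(n*-2, t-2)·(1-tγ)^{t-2}; equivalently, at most (1 - (1-tγ)^{t-2})·C(n*-2, t-2) of the t-element subsets containing both endpoints of e induce a non-complete subgraph. -/
/-!
Every set of `i` vertices has at least `n(1 - iγ)` common neighbours, so a clique `A` with fewer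
than `t` vertices has at least `d = n(1 - tγ)` one-vertex extensions. A clique with `|S| + j + 1`
vertices containing `S` extends at most `j + 1` cliques with `|S| + j` vertices containing `S`.
Double counting these extensions shows by induction on `j` that a clique `S` lies in at least
`d ^ j / j!` cliques with `|S| + j` vertices, and `n ^ j / j! ≥ C(n - |S|, j)`. An edge is the case
`|S| = 2`.
-/

open Finset
open scoped Nat

section

variable {V : Type*} [Fintype V] (G : SimpleGraph V) [DecidableRel G.Adj]

/-- The common neighbourhood of a set `A` of vertices, generalising `SimpleGraph.commonNeighbors`
from pairs to finite sets; it is all of `V` when `A` is empty. -/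
def commonNeighborFinset (A : Finset V) : Finset V :=
  {w | ∀ v ∈ A, G.Adj v w}

variable {G}

lemma mem_commonNeighborFinset {A : Finset V} {w : V} :
    w ∈ commonNeighborFinset G A ↔ ∀ v ∈ A, G.Adj v w := by
  simp [commonNeighborFinset]

lemma notMem_of_mem_commonNeighborFinset {A : Finset V} {w : V}
    (hw : w ∈ commonNeighborFinset G A) : w ∉ A :=
  fun hwA => G.irrefl (mem_commonNeighborFinset.1 hw w hwA)

lemma compl_commonNeighborFinset [DecidableEq V] (A : Finset V) :
    (commonNeighborFinset G A)ᶜ = A.biUnion fun v => (G.neighborFinset v)ᶜ := by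
  ext w
  simp [mem_commonNeighborFinset]

lemma card_mul_one_sub_le_card_commonNeighborFinset {γ : ℝ} {A : Finset V}
    (hδ : ∀ v ∈ A, (Fintype.card V : ℝ) * (1 - γ) ≤ G.degree v) :
    (Fintype.card V : ℝ) * (1 - #A * γ) ≤ #(commonNeighborFinset G A) := by
  classical
  have hcompl (B : Finset V) : (#Bᶜ : ℝ) = Fintype.card V - #B := by
    rw [card_compl, Nat.cast_sub (card_le_univ B)]
  have hnonadj : ∀ v ∈ A, (#(G.neighborFinset v)ᶜ : ℝ) ≤ Fintype.card V * γ := by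
    intro v hv
    rw [hcompl, G.card_neighborFinset_eq_degree]
    linarith [hδ v hv]
  have hunion : (#(commonNeighborFinset G A)ᶜ : ℝ) ≤ #A * (Fintype.card V * γ) :=
    calc
      (#(commonNeighborFinset G A)ᶜ : ℝ) ≤ ∑ v ∈ A, (#(G.neighborFinset v)ᶜ : ℝ) := by
        rw [compl_commonNeighborFinset]
        exact_mod_cast card_biUnion_le
      _ ≤ #A * (Fintype.card V * γ) := by
        simpa using sum_le_card_nsmul A _ _ hnonadj
  rw [hcompl] at hunion
  linarith

variable [DecidableEq V]

variable (G) in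
/-- The `k`-cliques of `G` that contain the vertex set `S`. -/
def cliquesContaining (S : Finset V) (k : ℕ) : Finset (Finset V) :=
  {T ∈ G.cliqueFinset k | S ⊆ T}

lemma mem_cliquesContaining {S T : Finset V} {k : ℕ} :
    T ∈ cliquesContaining G S k ↔ G.IsNClique k T ∧ S ⊆ T := by
  simp [cliquesContaining]

lemma insert_mem_cliquesContaining {S A : Finset V} {k : ℕ} {w : V}
    (hA : A ∈ cliquesContaining G S k) (hw : w ∈ commonNeighborFinset G A) :
    insert w A ∈ cliquesContaining G S (k + 1) := by
  obtain ⟨hclique, hSA⟩ := mem_cliquesContaining.1 hA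
  exact mem_cliquesContaining.2
    ⟨hclique.insert fun v hv => (mem_commonNeighborFinset.1 hw v hv).symm,
      hSA.trans (subset_insert w A)⟩

lemma card_commonNeighborFinset_le_card_extensions {S A : Finset V} {k : ℕ}
    (hA : A ∈ cliquesContaining G S k) :
    #(commonNeighborFinset G A) ≤ #{T ∈ cliquesContaining G S (k + 1) | A ⊆ T} := by
  apply card_le_card_of_injOn fun w => insert w A
  · intro w hw
    exact mem_filter.2 ⟨insert_mem_cliquesContaining hA hw, subset_insert w A⟩
  · exact (insert_inj_on A).mono fun w hw => notMem_of_mem_commonNeighborFinset hw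

lemma card_subcliques_le {S T : Finset V} {j : ℕ}
    (hT : T ∈ cliquesContaining G S (#S + (j + 1))) :
    #{A ∈ cliquesContaining G S (#S + j) | A ⊆ T} ≤ j + 1 := by
  obtain ⟨hclique, hST⟩ := mem_cliquesContaining.1 hT
  calc
    #{A ∈ cliquesContaining G S (#S + j) | A ⊆ T}
      ≤ #{A ∈ T.powersetCard (#S + j) | S ⊆ A} := by
        refine card_le_card fun A hA => ?_
        obtain ⟨hAclique, hAT⟩ := mem_filter.1 hA
        obtain ⟨hAclique, hSA⟩ := mem_cliquesContaining.1 hAclique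
        exact mem_filter.2 ⟨mem_powersetCard.2 ⟨hAT, hAclique.card_eq⟩, hSA⟩
    _ = j + 1 := by
        rw [card_filter_powersetCard_subset S T _ hST (Nat.le_add_right _ _), hclique.card_eq]
        simp

lemma card_cliquesContaining_mul_le {S : Finset V} {j : ℕ} {d : ℝ}
    (hd : ∀ A ∈ cliquesContaining G S (#S + j), d ≤ #(commonNeighborFinset G A)) :
    #(cliquesContaining G S (#S + j)) * d ≤
      #(cliquesContaining G S (#S + (j + 1))) * (j + 1 : ℝ) := by
  simpa only [nsmul_eq_mul] using card_nsmul_le_card_nsmul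
    (s := cliquesContaining G S (#S + j)) (t := cliquesContaining G S (#S + (j + 1))) (· ⊆ ·)
    (fun A hA => (hd A hA).trans
      (Nat.cast_le.2 (card_commonNeighborFinset_le_card_extensions hA)))
    (fun T hT => by exact_mod_cast card_subcliques_le hT)

lemma pow_le_factorial_mul_card_cliquesContaining {S : Finset V} (hS : G.IsClique S) {d : ℝ}
    (hd₀ : 0 ≤ d) (j : ℕ)
    (hd : ∀ i < j, ∀ A ∈ cliquesContaining G S (#S + i), d ≤ #(commonNeighborFinset G A)) :
    d ^ j ≤ j ! * #(cliquesContaining G S (#S + j)) := by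
  induction j with
  | zero =>
    have hmem : S ∈ cliquesContaining G S #S := mem_cliquesContaining.2 ⟨⟨hS, rfl⟩, Subset.rfl⟩
    simpa [Nat.one_le_iff_ne_zero] using ne_empty_of_mem hmem
  | succ j ih =>
    calc
      d ^ (j + 1) = d ^ j * d := pow_succ d j
      _ ≤ j ! * #(cliquesContaining G S (#S + j)) * d := by
        gcongr
        exact ih fun i hi => hd i (hi.trans j.lt_succ_self)
      _ = j ! * (#(cliquesContaining G S (#S + j)) * d) := mul_assoc ..
      _ ≤ j ! * (#(cliquesContaining G S (#S + (j + 1))) * (j + 1 : ℝ)) := by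
        exact mul_le_mul_of_nonneg_left (card_cliquesContaining_mul_le (hd j j.lt_succ_self))
          (Nat.cast_nonneg _)
      _ = (j + 1)! * #(cliquesContaining G S (#S + (j + 1))) := by
        rw [Nat.factorial_succ]
        push_cast
        ring

lemma choose_mul_pow_le_card_cliquesContaining {S : Finset V} (hS : G.IsClique S) {p : ℝ}
    (hp : 0 ≤ p) (j : ℕ)
    (hcommon : ∀ i < j, ∀ A ∈ cliquesContaining G S (#S + i),
      Fintype.card V * p ≤ #(commonNeighborFinset G A)) :
    ((Fintype.card V - #S).choose j : ℝ) * p ^ j ≤ #(cliquesContaining G S (#S + j)) :=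
  calc
    ((Fintype.card V - #S).choose j : ℝ) * p ^ j ≤ (Fintype.card V).choose j * p ^ j := by
      gcongr
      exact Nat.sub_le _ _
    _ ≤ (Fintype.card V : ℝ) ^ j / j ! * p ^ j := by
      gcongr
      exact Nat.choose_le_pow_div _ _
    _ = (Fintype.card V * p) ^ j / j ! := by
      rw [mul_pow, div_mul_eq_mul_div]
    _ ≤ #(cliquesContaining G S (#S + j)) :=
      div_le_of_le_mul₀ (by positivity) (by positivity) <| by
        simpa only [mul_comm] using
          pow_le_factorial_mul_card_cliquesContaining hS (by positivity) j hcommon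

lemma ncard_isClique_eq_card_cliquesContaining (S : Finset V) (t : ℕ) :
    {T : Finset V | #T = t ∧ S ⊆ T ∧ G.IsClique (T : Set V)}.ncard =
      #(cliquesContaining G S t) := by
  rw [← Set.ncard_coe_finset]
  congr 1
  ext T
  simp only [Set.mem_ofPred_eq, mem_coe, mem_cliquesContaining, SimpleGraph.isNClique_iff]
  tauto

end

lemma ncard_add_ncard_not_eq_choose {α : Type*} [Fintype α] {S : Finset α} {t : ℕ} (hSt : #S ≤ t)
    (P : Finset α → Prop) :
    {T : Finset α | #T = t ∧ S ⊆ T ∧ P T}.ncard + {T : Finset α | #T = t ∧ S ⊆ T ∧ ¬ P T}.ncard =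
      (Fintype.card α - #S).choose (t - #S) := by
  classical
  rw [← card_univ, ← card_filter_powersetCard_subset S univ t (subset_univ S) hSt,
    ← card_filter_add_card_filter_not P, ← Set.ncard_coe_finset, ← Set.ncard_coe_finset]
  simp [and_assoc]

theorem random_subset_is_clique_general {V : Type*} [Fintype V] (t : ℕ)
    (γ : ℝ) (hγ : 0 ≤ γ) (hγt : 0 ≤ 1 - (t : ℝ) * γ) (G : SimpleGraph V)
    (hδ : ∀ v, (Fintype.card V : ℝ) * (1 - γ) ≤ ((G.neighborSet v).ncard : ℝ))
    (S : Finset V) (hSt : #S ≤ t) (hS : G.IsClique (S : Set V)) :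
    ((Fintype.card V - #S).choose (t - #S) : ℝ) * (1 - (t : ℝ) * γ) ^ (t - #S) ≤
      ({T : Finset V | #T = t ∧ S ⊆ T ∧ G.IsClique (T : Set V)}.ncard : ℝ) ∧
    ({T : Finset V | #T = t ∧ S ⊆ T ∧ ¬ G.IsClique (T : Set V)}.ncard : ℝ) ≤
      (1 - (1 - (t : ℝ) * γ) ^ (t - #S)) * ((Fintype.card V - #S).choose (t - #S) : ℝ) := by
  classical
  have hdegree (v : V) : (Fintype.card V : ℝ) * (1 - γ) ≤ G.degree v := by
    rw [← G.card_neighborSet_eq_degree, ← Set.toFinset_card, ← Set.ncard_eq_toFinset_card']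
    exact hδ v
  have hcommon : ∀ i < t - #S, ∀ A ∈ cliquesContaining G S (#S + i),
      (Fintype.card V : ℝ) * (1 - t * γ) ≤ #(commonNeighborFinset G A) := by
    intro i hi A hA
    have hAt : #A ≤ t := by
      rw [(mem_cliquesContaining.1 hA).1.card_eq]
      omega
    calc
      (Fintype.card V : ℝ) * (1 - t * γ) ≤ Fintype.card V * (1 - #A * γ) := by gcongr
      _ ≤ #(commonNeighborFinset G A) :=
        card_mul_one_sub_le_card_commonNeighborFinset fun v _ => hdegree v
  have hcliques := choose_mul_pow_le_card_cliquesContaining hS hγt (t - #S) hcommon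
  rw [Nat.add_sub_cancel' hSt, ← ncard_isClique_eq_card_cliquesContaining] at hcliques
  have htotal := congrArg (Nat.cast (R := ℝ))
    (ncard_add_ncard_not_eq_choose hSt fun T : Finset V => G.IsClique (T : Set V))
  push_cast at htotal
  exact ⟨hcliques, by linarith⟩

/-- Let `t ≥ 2` and `0 ≤ γ` with `1 - tγ ≥ 0`. If `G*` is a graph with `n*` vertices and minimum
degree at least `n*(1-γ)`, then for every edge of `G*`, at least `C(n*-2,t-2)·(1-tγ)^(t-2)` of
the `t`-element vertex subsets containing both endpoints induce a complete graph `K_t`;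
equivalently, at most `(1-(1-tγ)^(t-2))·C(n*-2,t-2)` of them induce a non-complete subgraph. -/
theorem random_subset_is_clique {V : Type*} [Fintype V] (t : ℕ) (ht : 2 ≤ t)
    (γ : ℝ) (hγ : 0 ≤ γ) (hγt : 0 ≤ 1 - (t : ℝ) * γ) (G : SimpleGraph V)
    (hδ : ∀ v, (Fintype.card V : ℝ) * (1 - γ) ≤ ((G.neighborSet v).ncard : ℝ))
    (u v : V) (huv : G.Adj u v) :
    ((Fintype.card V - 2).choose (t - 2) : ℝ) * (1 - (t : ℝ) * γ) ^ (t - 2) ≤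
      ({T : Finset V | T.card = t ∧ u ∈ T ∧ v ∈ T ∧ G.IsClique (T : Set V)}.ncard : ℝ) ∧
    ({T : Finset V | T.card = t ∧ u ∈ T ∧ v ∈ T ∧ ¬ G.IsClique (T : Set V)}.ncard : ℝ) ≤
      (1 - (1 - (t : ℝ) * γ) ^ (t - 2)) * ((Fintype.card V - 2).choose (t - 2) : ℝ) := by
  classical
  simpa [insert_subset_iff, and_assoc, card_pair huv.ne] using
    random_subset_is_clique_general t γ hγ hγt G hδ {u, v} (card_le_two.trans ht)
      (by simpa using fun _ => huv)
end

section
/- Let k ≥ 3 be an integer and t = 2k-1. There exists n₀ such that for every n ≥ n₀ with n ≡ 1 (mod t(t-1)), every t-design D on [n], and every graph G on vertex set {1,…,n} with minimum degree at least n·(1 - 1/(9k¹⁰)), there exists a permutation π of {1,…,n} with the following property: letting A_π be the set of edges of G that lie inside some block π(S) = {π(j) : j ∈ S}, S ∈ D, whose induced subgraph G[π(S)] is not a complete graph K_t, the graph on {1,…,n} with edge set A_π has maximum degree at most 6n/k⁷. -/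
/-!
Relabel `G` by a uniformly random permutation `π` and fix a vertex `p`. Removing `p` from the
blocks through it leaves pairwise disjoint sets, so the events that `π` maps them to non-cliques
behave almost independently. Concretely, suppose that `π` sends two points `a`, `b` of one of these
sets to non-adjacent vertices. Replacing `π` by `π * swap b c`, where `c ≠ a` lies outside a few
other sets, does not affect what happens on those, and a given permutation arises in this way at
most `Δ` times, where `Δ` is the maximum degree of `Gᶜ`, because the former image of `b` is a
non-neighbour of the image of `a`. Hence any `j` of the sets become non-cliques simultaneously with
probability at most `(s² Δ / N) ^ j`, where `s` bounds their sizes and `N ≈ n - j s`. By Markov's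
inequality for the `j`-th binomial moment, `3 j` of them do so with probability at most `2⁻ʲ`, which
for `j ≈ n / k ^ 8` is less than `1 / n`, and a union bound over `p` applies. The other non-clique
blocks through `p` contain a non-neighbour of `p`, and there are at most `Δ` of those.
-/

open Finset Filter
open Equiv (Perm swap)

section Counting

theorem eventually_lt_two_pow_div {K : ℕ} (hK : K ≠ 0) : ∀ᶠ n in atTop, n < 2 ^ (n / K) := by
  have hlin : ∀ᶠ j : ℕ in atTop, K * (j + 1) ≤ 2 ^ j := by
    filter_upwards [(isLittleO_coe_const_pow_of_one_lt (R := ℝ) one_lt_two).bound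
      (show (0 : ℝ) < 1 / (2 * K) by positivity), eventually_ge_atTop 1] with j hj hj1
    rw [Real.norm_natCast, Real.norm_of_nonneg (by positivity), one_div_mul_eq_div,
      le_div_iff₀ (by positivity)] at hj
    have hj' : j * (2 * K) ≤ 2 ^ j := by exact_mod_cast hj
    nlinarith
  filter_upwards [(Nat.tendsto_div_const_atTop hK).eventually hlin] with n hn
  exact (Nat.lt_mul_div_succ n (Nat.pos_of_ne_zero hK)).trans_le hn

theorem sum_choose_card_filter {α β : Type*} (r : α → β → Prop) [∀ a b, Decidable (r a b)]
    (A : Finset α) (B : Finset β) (j : ℕ) :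
    ∑ a ∈ A, (#{b ∈ B | r a b}).choose j = ∑ T ∈ B.powersetCard j, #{a ∈ A | ∀ b ∈ T, r a b} := by
  convert sum_card_bipartiteAbove_eq_sum_card_bipartiteBelow (s := A) (t := B.powersetCard j)
    (fun a T ↦ ∀ b ∈ T, r a b) using 2 with a _
  · rw [← card_powersetCard]
    congr 1
    ext T
    simp only [mem_powersetCard, mem_bipartiteAbove, subset_iff, mem_filter]
    grind
  · rfl

theorem card_filter_not_disjoint_le {α : Type*} [DecidableEq α] {P : Finset (Finset α)}
    (hP : (P : Set (Finset α)).PairwiseDisjoint id) (A : Finset α) :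
    #{Q ∈ P | ¬ Disjoint Q A} ≤ #A :=
  calc #{Q ∈ P | ¬ Disjoint Q A} ≤ #({Q ∈ P | ¬ Disjoint Q A}.biUnion (· ∩ A)) :=
        card_le_card_biUnion
          ((hP.subset (filter_subset _ _)).mono fun _ ↦ inter_subset_left)
          fun _ hQ ↦ not_disjoint_iff_nonempty_inter.1 (mem_filter.1 hQ).2
    _ ≤ #A := card_le_card (biUnion_subset.2 fun _ _ ↦ inter_subset_right)

end Counting

theorem isClique_comap_congr {V W : Type*} (G : SimpleGraph W) {f g : V → W} {s : Set V}
    (hfg : Set.EqOn f g s) : (G.comap f).IsClique s ↔ (G.comap g).IsClique s := by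
  simp only [SimpleGraph.IsClique, Set.Pairwise, SimpleGraph.comap_adj]
  refine forall₂_congr fun x hx ↦ forall₂_congr fun y hy ↦ ?_
  rw [hfg hx, hfg hy]

section LinearFamily
variable {V : Type*} [DecidableEq V]

/-- A linear family (linear hypergraph): any two distinct blocks share at most one point, that is,
any two points lie in at most one common block. -/
def IsLinearFamily (D : Finset (Finset V)) : Prop :=
  (D : Set (Finset V)).Pairwise fun S T ↦ #(S ∩ T) ≤ 1

theorem IsLinearFamily.of_existsUnique {D : Finset (Finset V)}
    (hD : ∀ a b : V, a ≠ b → ∃! S, S ∈ D ∧ a ∈ S ∧ b ∈ S) : IsLinearFamily D := by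
  intro S hS T hT hST
  by_contra! hlt
  obtain ⟨a, ha, b, hb, hab⟩ := one_lt_card.1 hlt
  rw [mem_inter] at ha hb
  exact hST ((hD a b hab).unique ⟨hS, ha.1, hb.1⟩ ⟨hT, ha.2, hb.2⟩)

theorem card_le_of_mem_memberSubfamily {D : Finset (Finset V)} {s : ℕ}
    (hs : ∀ S ∈ D, #S ≤ s + 1) {p : V} {Q : Finset V} (hQ : Q ∈ D.memberSubfamily p) :
    #Q ≤ s := by
  obtain ⟨hQD, hpQ⟩ := mem_memberSubfamily.1 hQ
  simpa [hpQ] using hs _ hQD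

theorem IsLinearFamily.pairwiseDisjoint_memberSubfamily {D : Finset (Finset V)}
    (hD : IsLinearFamily D) (p : V) :
    (D.memberSubfamily p : Set (Finset V)).PairwiseDisjoint id := by
  intro S hS T hT hST
  rw [mem_coe, mem_memberSubfamily] at hS hT
  refine disjoint_left.2 fun x hxS hxT ↦ hS.2 ?_
  have hne : insert p S ≠ insert p T := fun h ↦ hST <| by
    rw [← erase_insert hS.2, h, erase_insert hT.2]
  rwa [card_le_one.1 (hD hS.1 hT.1 hne) p (by simp) x (by simp_all)]

theorem IsLinearFamily.card_memberSubfamily_le [Fintype V] {D : Finset (Finset V)}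
    (hD : IsLinearFamily D) (p : V) : #(D.memberSubfamily p) ≤ Fintype.card V := by
  have hp : p ∉ (D.memberSubfamily p).biUnion id := by
    simp only [mem_biUnion, mem_memberSubfamily, id]
    tauto
  calc #(D.memberSubfamily p) ≤ #((D.memberSubfamily p).biUnion id) + 1 :=
        card_le_card_biUnion_add_one Function.injective_id (hD.pairwiseDisjoint_memberSubfamily p)
    _ ≤ Fintype.card V := card_lt_univ_of_notMem hp

end LinearFamily

section Switching
variable {V : Type*} [DecidableEq V] [Fintype V]

theorem card_mul_card_le_of_mul_swap_mem (H : SimpleGraph V) [DecidableRel H.Adj]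
    {E F : Finset (Perm V)} {C : Finset V} {a b : V} (haC : a ∉ C)
    (hadj : ∀ π ∈ E, H.Adj (π a) (π b)) (hswap : ∀ π ∈ E, ∀ c ∈ C, π * swap b c ∈ F) :
    #E * #C ≤ #F * H.maxDegree := by
  have hle : #(E ×ˢ C) ≤ #(F.sigma fun π ↦ H.neighborFinset (π a)) := by
    refine card_le_card_of_injOn (fun x ↦ ⟨x.1 * swap b x.2, x.1 b⟩) ?_ ?_
    · rintro ⟨π, c⟩ hx
      obtain ⟨hπ, hc⟩ := mem_product.1 hx
      have hab : a ≠ b := fun h ↦ (hadj π hπ).ne (congrArg π h)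
      have hac : a ≠ c := fun h ↦ haC (h ▸ hc)
      rw [mem_coe, mem_sigma, SimpleGraph.mem_neighborFinset, Perm.mul_apply,
        Equiv.swap_apply_of_ne_of_ne hab hac]
      exact ⟨hswap π hπ c hc, hadj π hπ⟩
    · rintro ⟨π, c⟩ _ ⟨π', c'⟩ _ h
      simp only [Sigma.mk.injEq, heq_eq_eq] at h
      obtain ⟨hmul, hb⟩ := h
      obtain rfl : c = c' := (π * swap b c).injective <| by
        conv_rhs => rw [hmul]
        simpa using hb
      rw [mul_right_cancel hmul]
  calc #E * #C = #(E ×ˢ C) := (card_product E C).symm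
    _ ≤ ∑ π ∈ F, H.degree (π a) := hle.trans_eq (card_sigma _ _)
    _ ≤ #F * H.maxDegree := sum_le_card_nsmul _ _ _ fun π _ ↦ H.degree_le_maxDegree (π a)

end Switching

section NonCliques
variable {V : Type*} [DecidableEq V] [Fintype V] (G : SimpleGraph V) [DecidableRel G.Adj]

/-- The members of `P` that are not cliques of `G`. It is applied to the relabelled graph
`G.comap π`, where it picks out the `Q ∈ P` whose image `π(Q)` is not a clique of `G`. -/
def nonCliques (P : Finset (Finset V)) : Finset (Finset V) := {Q ∈ P | ¬ G.IsClique (Q : Set V)}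

/-- The permutations that map every member of `T` to a non-clique of `G`: the joint event whose
probability the switching argument bounds. -/
def nonCliquePerms (T : Finset (Finset V)) : Finset (Perm V) :=
  {π | ∀ Q ∈ T, ¬ (G.comap π).IsClique (Q : Set V)}

variable {G}

theorem card_filter_compl_adj_mul_le {T : Finset (Finset V)} {s N : ℕ} {b : V}
    (hb : ∀ Q ∈ T, b ∉ Q) (hs : ∀ Q ∈ T, #Q ≤ s) (hN : N + #T * s < Fintype.card V) (a : V) :
    #{π ∈ nonCliquePerms G T | Gᶜ.Adj (π a) (π b)} * N ≤ #(nonCliquePerms G T) * Gᶜ.maxDegree := by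
  set C := (insert a (T.biUnion id))ᶜ with hC
  have hNC : N ≤ #C := by
    have hins := card_insert_le a (T.biUnion id)
    have hunion : #(T.biUnion id) ≤ #T * s := card_biUnion_le_card_mul _ _ _ hs
    rw [hC, card_compl]
    omega
  refine (Nat.mul_le_mul_left _ hNC).trans
    (card_mul_card_le_of_mul_swap_mem Gᶜ (b := b) (by simp [hC])
      (fun π hπ ↦ (mem_filter.1 hπ).2) fun π hπ c hc ↦ ?_)
  have hπT := (mem_filter.1 (mem_filter.1 hπ).1).2
  refine mem_filter.2 ⟨mem_univ _, fun Q hQ ↦ ?_⟩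
  have hcQ : c ∉ Q := by
    simp only [hC, mem_compl, mem_insert, mem_biUnion, id, not_or, not_exists, not_and] at hc
    exact hc.2 Q hQ
  rw [isClique_comap_congr G (g := π)]
  · exact hπT Q hQ
  · intro x hx
    rw [Perm.mul_apply, Equiv.swap_apply_of_ne_of_ne (ne_of_mem_of_not_mem hx (hb Q hQ))
      (ne_of_mem_of_not_mem hx hcQ)]

theorem nonCliquePerms_insert_subset (Q : Finset V) (T : Finset (Finset V)) :
    nonCliquePerms G (insert Q T) ⊆
      (Q ×ˢ Q).biUnion fun x ↦ {π ∈ nonCliquePerms G T | Gᶜ.Adj (π x.1) (π x.2)} := by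
  intro π hπ
  obtain ⟨hQ, hT⟩ := forall_mem_insert _ _ _ |>.1 (mem_filter.1 hπ).2
  simp only [SimpleGraph.IsClique, Set.Pairwise, SimpleGraph.comap_adj, not_forall] at hQ
  obtain ⟨a, ha, b, hb, hab, hadj⟩ := hQ
  exact mem_biUnion.2 ⟨(a, b), mem_product.2 ⟨ha, hb⟩, mem_filter.2
    ⟨mem_filter.2 ⟨mem_univ _, hT⟩, (G.compl_adj _ _).2 ⟨π.injective.ne hab, hadj⟩⟩⟩

theorem card_nonCliquePerms_insert_mul_le {Q : Finset V} {T : Finset (Finset V)} {s N : ℕ}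
    (hQT : ∀ Q' ∈ T, Disjoint Q Q') (hQ : #Q ≤ s) (hT : ∀ Q' ∈ T, #Q' ≤ s)
    (hN : N + #T * s < Fintype.card V) :
    #(nonCliquePerms G (insert Q T)) * N ≤
      s ^ 2 * Gᶜ.maxDegree * #(nonCliquePerms G T) := by
  let E (x : V × V) : Finset (Perm V) := {π ∈ nonCliquePerms G T | Gᶜ.Adj (π x.1) (π x.2)}
  have hE : ∀ x ∈ Q ×ˢ Q, #(E x) * N ≤ #(nonCliquePerms G T) * Gᶜ.maxDegree := fun x hx ↦
    card_filter_compl_adj_mul_le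
      (fun Q' hQ' ↦ disjoint_left.1 (hQT Q' hQ') (mem_product.1 hx).2) hT hN x.1
  calc #(nonCliquePerms G (insert Q T)) * N
      ≤ (∑ x ∈ Q ×ˢ Q, #(E x)) * N :=
        Nat.mul_le_mul_right _
          ((card_le_card (nonCliquePerms_insert_subset Q T)).trans card_biUnion_le)
    _ = ∑ x ∈ Q ×ˢ Q, #(E x) * N := sum_mul _ _ _
    _ ≤ #(Q ×ˢ Q) * (#(nonCliquePerms G T) * Gᶜ.maxDegree) := sum_le_card_nsmul _ _ _ hE
    _ ≤ s ^ 2 * (#(nonCliquePerms G T) * Gᶜ.maxDegree) := by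
        rw [card_product, ← sq]
        gcongr
    _ = s ^ 2 * Gᶜ.maxDegree * #(nonCliquePerms G T) := by ring

theorem card_nonCliquePerms_mul_pow_le {T : Finset (Finset V)} {s N : ℕ}
    (hdisj : (T : Set (Finset V)).PairwiseDisjoint id) (hs : ∀ Q ∈ T, #Q ≤ s)
    (hN : N + #T * s < Fintype.card V) :
    #(nonCliquePerms G T) * N ^ #T ≤
      (Fintype.card V).factorial * (s ^ 2 * Gᶜ.maxDegree) ^ #T := by
  induction T using Finset.induction_on with
  | empty => simp [nonCliquePerms, Fintype.card_perm]
  | insert Q T hQT ih =>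
    rw [card_insert_of_notMem hQT] at hN ⊢
    rw [coe_insert, Set.pairwiseDisjoint_insert_of_notMem (by simpa using hQT)] at hdisj
    obtain ⟨hQs, hTs⟩ := (forall_mem_insert _ _ _).1 hs
    have hN' : N + #T * s < Fintype.card V := by nlinarith
    calc #(nonCliquePerms G (insert Q T)) * N ^ (#T + 1)
        = #(nonCliquePerms G (insert Q T)) * N * N ^ #T := by ring
      _ ≤ s ^ 2 * Gᶜ.maxDegree * #(nonCliquePerms G T) * N ^ #T :=
          Nat.mul_le_mul_right _ (card_nonCliquePerms_insert_mul_le hdisj.2 hQs hTs hN')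
      _ = s ^ 2 * Gᶜ.maxDegree * (#(nonCliquePerms G T) * N ^ #T) := by ring
      _ ≤ s ^ 2 * Gᶜ.maxDegree *
            ((Fintype.card V).factorial * (s ^ 2 * Gᶜ.maxDegree) ^ #T) :=
          Nat.mul_le_mul_left _ (ih hdisj.1 hTs hN')
      _ = (Fintype.card V).factorial * (s ^ 2 * Gᶜ.maxDegree) ^ (#T + 1) := by ring

theorem sum_choose_card_nonCliques_mul_pow_le {P : Finset (Finset V)} {s N j : ℕ}
    (hdisj : (P : Set (Finset V)).PairwiseDisjoint id) (hs : ∀ Q ∈ P, #Q ≤ s)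
    (hN : N + j * s < Fintype.card V) :
    (∑ π : Perm V, (#(nonCliques (G.comap π) P)).choose j) * N ^ j ≤
      (#P).choose j * ((Fintype.card V).factorial * (s ^ 2 * Gᶜ.maxDegree) ^ j) := by
  have hdouble : ∑ π : Perm V, (#(nonCliques (G.comap π) P)).choose j =
      ∑ T ∈ P.powersetCard j, #(nonCliquePerms G T) := by
    convert sum_choose_card_filter
      (fun (π : Perm V) (Q : Finset V) ↦ ¬ (G.comap π).IsClique (Q : Set V)) univ P j
    · ext; simp only [nonCliques, mem_filter]
    · ext; simp only [nonCliquePerms, mem_filter]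
  rw [hdouble, sum_mul, ← card_powersetCard]
  refine sum_le_card_nsmul _ _ _ fun T hT ↦ ?_
  obtain ⟨hTP, rfl⟩ := mem_powersetCard.1 hT
  exact card_nonCliquePerms_mul_pow_le (hdisj.subset hTP) (fun Q hQ ↦ hs Q (hTP hQ)) hN

theorem card_filter_le_card_nonCliques_mul_pow_le {P : Finset (Finset V)} {s N j : ℕ} (m : ℕ)
    (hdisj : (P : Set (Finset V)).PairwiseDisjoint id) (hs : ∀ Q ∈ P, #Q ≤ s)
    (hN : N + j * s < Fintype.card V) :
    #{π : Perm V | j + m ≤ #(nonCliques (G.comap π) P)} * (m * N) ^ j ≤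
      (Fintype.card V).factorial * (#P * (s ^ 2 * Gᶜ.maxDegree)) ^ j := by
  set E : Finset (Perm V) := {π | j + m ≤ #(nonCliques (G.comap π) P)}
  have hmarkov : #E * (j + m).choose j ≤ ∑ π : Perm V, (#(nonCliques (G.comap π) P)).choose j :=
    calc #E * (j + m).choose j ≤ ∑ π ∈ E, (#(nonCliques (G.comap π) P)).choose j :=
          card_nsmul_le_sum _ _ _ fun π hπ ↦ Nat.choose_le_choose j (mem_filter.1 hπ).2
      _ ≤ _ := sum_le_sum_of_subset (subset_univ _)
  have hpow : m ^ j ≤ j.factorial * (j + m).choose j := by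
    rw [← Nat.descFactorial_eq_factorial_mul_choose]
    refine le_trans ?_ (Nat.pow_sub_le_descFactorial (j + m) j)
    gcongr
    omega
  calc #E * (m * N) ^ j = #E * m ^ j * N ^ j := by rw [mul_pow, mul_assoc]
    _ ≤ #E * (j.factorial * (j + m).choose j) * N ^ j := by gcongr
    _ = j.factorial * (#E * (j + m).choose j * N ^ j) := by ring
    _ ≤ j.factorial *
          ((#P).choose j * ((Fintype.card V).factorial * (s ^ 2 * Gᶜ.maxDegree) ^ j)) :=
        Nat.mul_le_mul_left _ ((Nat.mul_le_mul_right _ hmarkov).trans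
          (sum_choose_card_nonCliques_mul_pow_le hdisj hs hN))
    _ = (#P).descFactorial j * ((Fintype.card V).factorial * (s ^ 2 * Gᶜ.maxDegree) ^ j) := by
        rw [Nat.descFactorial_eq_factorial_mul_choose, mul_assoc]
    _ ≤ #P ^ j * ((Fintype.card V).factorial * (s ^ 2 * Gᶜ.maxDegree) ^ j) := by
        gcongr
        exact Nat.descFactorial_le_pow _ _
    _ = (Fintype.card V).factorial * (#P * (s ^ 2 * Gᶜ.maxDegree)) ^ j := by ring

theorem card_filter_three_mul_le_card_nonCliques {P : Finset (Finset V)} {s j : ℕ} (hj : 0 < j)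
    (hdisj : (P : Set (Finset V)).PairwiseDisjoint id) (hs : ∀ Q ∈ P, #Q ≤ s)
    (hP : #P ≤ Fintype.card V) (hdeg : 2 * s ^ 2 * Gᶜ.maxDegree ≤ j)
    (hcard : 2 * (j * s + 1) ≤ Fintype.card V) :
    #{π : Perm V | 3 * j ≤ #(nonCliques (G.comap π) P)} * 2 ^ j ≤ (Fintype.card V).factorial := by
  obtain ⟨N, hN⟩ : ∃ N, Fintype.card V = N + j * s + 1 :=
    ⟨Fintype.card V - (j * s + 1), by omega⟩
  have hratio : 2 * (#P * (s ^ 2 * Gᶜ.maxDegree)) ≤ 2 * j * N :=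
    calc 2 * (#P * (s ^ 2 * Gᶜ.maxDegree)) = #P * (2 * s ^ 2 * Gᶜ.maxDegree) := by ring
      _ ≤ (2 * N) * j := Nat.mul_le_mul (by omega) hdeg
      _ = 2 * j * N := by ring
  have hpos : 0 < (2 * j * N) ^ j := pow_pos (Nat.mul_pos (by omega) (by omega)) j
  refine Nat.le_of_mul_le_mul_right ?_ hpos
  have htail := card_filter_le_card_nonCliques_mul_pow_le (G := G) (2 * j) hdisj hs
    (N := N) (j := j) (by omega)
  rw [show j + 2 * j = 3 * j by ring] at htail
  calc _ = #{π : Perm V | 3 * j ≤ #(nonCliques (G.comap π) P)} * (2 * j * N) ^ j * 2 ^ j := by ring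
    _ ≤ (Fintype.card V).factorial * (#P * (s ^ 2 * Gᶜ.maxDegree)) ^ j * 2 ^ j := by gcongr
    _ = (Fintype.card V).factorial * (2 * (#P * (s ^ 2 * Gᶜ.maxDegree))) ^ j := by
        rw [mul_pow 2]; ring
    _ ≤ (Fintype.card V).factorial * (2 * j * N) ^ j := by gcongr

theorem IsLinearFamily.exists_perm_card_nonCliques_lt {D : Finset (Finset V)} {s j : ℕ}
    (hD : IsLinearFamily D) (hs : ∀ S ∈ D, #S ≤ s + 1)
    (hdeg : 2 * s ^ 2 * Gᶜ.maxDegree ≤ j) (hcard : 2 * (j * s + 1) ≤ Fintype.card V)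
    (hj : Fintype.card V < 2 ^ j) :
    ∃ π : Perm V, ∀ p, #(nonCliques (G.comap π) (D.memberSubfamily p)) < 3 * j := by
  have hj0 : 0 < j := Nat.pos_of_ne_zero fun h ↦ by rw [h, pow_zero] at hj; omega
  by_contra! hbad
  let E (p : V) : Finset (Perm V) :=
    {π | 3 * j ≤ #(nonCliques (G.comap π) (D.memberSubfamily p))}
  have hE (p : V) : #(E p) * 2 ^ j ≤ (Fintype.card V).factorial := by
    exact card_filter_three_mul_le_card_nonCliques hj0 (hD.pairwiseDisjoint_memberSubfamily p)
      (fun _ ↦ card_le_of_mem_memberSubfamily hs) (hD.card_memberSubfamily_le p) hdeg hcard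
  have hcover : (univ : Finset (Perm V)) ⊆ univ.biUnion E := fun π _ ↦
    let ⟨p, hp⟩ := hbad π
    mem_biUnion.2 ⟨p, mem_univ _, mem_filter.2 ⟨mem_univ _, hp⟩⟩
  have hunion : (Fintype.card V).factorial * 2 ^ j ≤
      (Fintype.card V).factorial * Fintype.card V :=
    calc (Fintype.card V).factorial * 2 ^ j ≤ (∑ p, #(E p)) * 2 ^ j := by
          gcongr
          rw [← Fintype.card_perm, ← card_univ]
          exact (card_le_card hcover).trans card_biUnion_le
      _ = ∑ p, #(E p) * 2 ^ j := sum_mul _ _ _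
      _ ≤ Fintype.card V * (Fintype.card V).factorial := sum_le_card_nsmul _ _ _ fun p _ ↦ hE p
      _ = _ := mul_comm _ _
  exact hj.not_ge (Nat.le_of_mul_le_mul_left hunion (Nat.factorial_pos _))

end NonCliques

section SpoiledGraph
variable {V : Type*} [DecidableEq V]

/-- The graph `A_π` of the theorem, for the family `D` of blocks already permuted by `π`: its edges
are the edges of `G` inside a block of `D` that does not induce a complete subgraph. -/
def spoiledGraph (G : SimpleGraph V) (D : Finset (Finset V)) : SimpleGraph V where
  Adj u v := G.Adj u v ∧ ∃ S ∈ D, ¬ G.IsClique (S : Set V) ∧ u ∈ S ∧ v ∈ S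
  symm := ⟨fun _ _ ⟨hadj, S, hS, hclique, hu, hv⟩ ↦ ⟨hadj.symm, S, hS, hclique, hv, hu⟩⟩
  loopless := ⟨fun _ h ↦ h.1.ne rfl⟩

theorem spoiledGraph_image_comap (G : SimpleGraph V) (D : Finset (Finset V)) (π : Perm V) :
    (spoiledGraph G (D.image (image π))).comap π = spoiledGraph (G.comap π) D := by
  ext u v
  have hclique (S : Finset V) : G.IsClique (π '' S) ↔ (G.comap π).IsClique (S : Set V) :=
    π.injective.injOn.pairwise_image
  simp [spoiledGraph, hclique]

theorem neighborSet_spoiledGraph_image (G : SimpleGraph V) (D : Finset (Finset V)) (π : Perm V)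
    (v : V) : (spoiledGraph G (D.image (image π))).neighborSet v =
      {u | s(v, u) ∈ G.edgeSet ∧ ∃ S ∈ D, ¬ G.IsClique (π '' (S : Set V)) ∧
        ∀ x ∈ s(v, u), x ∈ π '' (S : Set V)} := by
  ext u
  simp [spoiledGraph, -Set.mem_image_equiv]

variable [Fintype V] {G : SimpleGraph V} [DecidableRel G.Adj]

theorem neighborSet_spoiledGraph_subset (D : Finset (Finset V)) (p : V) :
    (spoiledGraph G D).neighborSet p ⊆
      ((nonCliques G (D.memberSubfamily p) ∪
        {Q ∈ D.memberSubfamily p | ¬ Disjoint Q (Gᶜ.neighborFinset p)}).biUnion id :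
          Finset V) := by
  rintro u ⟨hadj, S, hS, hclique, hp, hu⟩
  have hlink : S.erase p ∈ D.memberSubfamily p :=
    mem_memberSubfamily.2 ⟨by rwa [insert_erase hp], notMem_erase p S⟩
  refine mem_biUnion.2 ⟨S.erase p, ?_, mem_erase.2 ⟨hadj.ne', hu⟩⟩
  rw [mem_union, nonCliques, mem_filter, mem_filter]
  by_contra! hgood
  obtain ⟨herase, hdisj⟩ := hgood.imp (· hlink) (· hlink)
  refine hclique ?_
  rw [← insert_erase hp, coe_insert, SimpleGraph.isClique_insert]
  refine ⟨herase, fun b hb hpb ↦ by_contra fun hnadj ↦ ?_⟩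
  exact disjoint_left.1 hdisj hb ((Gᶜ.mem_neighborFinset _ _).2 ((G.compl_adj _ _).2 ⟨hpb, hnadj⟩))

theorem IsLinearFamily.ncard_neighborSet_spoiledGraph_le {D : Finset (Finset V)} {s : ℕ}
    (hD : IsLinearFamily D) (hs : ∀ S ∈ D, #S ≤ s + 1) (p : V) :
    ((spoiledGraph G D).neighborSet p).ncard ≤
      (#(nonCliques G (D.memberSubfamily p)) + Gᶜ.degree p) * s := by
  refine (Set.ncard_le_ncard (neighborSet_spoiledGraph_subset D p) (finite_toSet _)).trans ?_
  rw [Set.ncard_coe_finset]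
  refine (card_biUnion_le_card_mul _ _ s fun Q hQ ↦ ?_).trans (Nat.mul_le_mul_right s ?_)
  · have hQlink : Q ∈ D.memberSubfamily p :=
      union_subset (filter_subset _ _) (filter_subset _ _) hQ
    exact card_le_of_mem_memberSubfamily hs hQlink
  · refine (card_union_le _ _).trans (Nat.add_le_add_left ?_ _)
    exact card_filter_not_disjoint_le (hD.pairwiseDisjoint_memberSubfamily p) _

theorem maxDegree_compl_comap (G : SimpleGraph V) [DecidableRel G.Adj] (π : Perm V) :
    (G.comap π)ᶜ.maxDegree = Gᶜ.maxDegree :=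
  SimpleGraph.Iso.maxDegree_eq ⟨π, by simp [π.injective.ne_iff]⟩

theorem IsLinearFamily.exists_perm_ncard_neighborSet_spoiledGraph_le {D : Finset (Finset V)}
    {s j : ℕ} (hD : IsLinearFamily D) (hs : ∀ S ∈ D, #S ≤ s + 1)
    (hdeg : 2 * s ^ 2 * Gᶜ.maxDegree ≤ j) (hcard : 2 * (j * s + 1) ≤ Fintype.card V)
    (hj : Fintype.card V < 2 ^ j) :
    ∃ π : Perm V, ∀ v, ((spoiledGraph G (D.image (image π))).neighborSet v).ncard ≤
      (3 * j + Gᶜ.maxDegree) * s := by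
  obtain ⟨π, hπ⟩ := hD.exists_perm_card_nonCliques_lt hs hdeg hcard hj
  refine ⟨π, π.surjective.forall.2 fun p ↦ ?_⟩
  calc ((spoiledGraph G (D.image (image π))).neighborSet (π p)).ncard
      = ((spoiledGraph (G.comap π) D).neighborSet p).ncard := by
        rw [← spoiledGraph_image_comap]
        exact (Nat.card_congr ((SimpleGraph.Iso.comap π _).mapNeighborSet p)).symm
    _ ≤ (#(nonCliques (G.comap π) (D.memberSubfamily p)) + (G.comap π)ᶜ.degree p) * s :=
        hD.ncard_neighborSet_spoiledGraph_le hs p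
    _ ≤ (3 * j + Gᶜ.maxDegree) * s := by
        gcongr
        · exact (hπ p).le
        · exact maxDegree_compl_comap G π ▸ SimpleGraph.degree_le_maxDegree _ p

theorem maxDegree_compl_le_of_le_ncard_neighborSet {δ : ℝ} (hδ : 0 ≤ δ)
    (hG : ∀ v, (Fintype.card V : ℝ) * (1 - δ) ≤ (G.neighborSet v).ncard) :
    (Gᶜ.maxDegree : ℝ) ≤ Fintype.card V * δ := by
  rw [← Nat.le_floor_iff (by positivity)]
  refine Gᶜ.maxDegree_le_of_forall_degree_le _ fun v ↦ Nat.le_floor ?_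
  have hdeg : (G.neighborSet v).ncard = G.degree v := by
    rw [← SimpleGraph.card_neighborFinset_eq_degree, ← Set.ncard_coe_finset,
      SimpleGraph.coe_neighborFinset]
  have hsum : Gᶜ.degree v + G.degree v ≤ Fintype.card V := by
    have := G.degree_lt_card_verts v
    rw [G.degree_compl]
    omega
  have hsum' : (Gᶜ.degree v : ℝ) + G.degree v ≤ Fintype.card V := by exact_mod_cast hsum
  linarith [hdeg ▸ hG v]

end SpoiledGraph

section Parameters

theorem two_mul_sq_mul_le_div_pow {l Δ n : ℕ} (hΔ : 9 * (l + 1) ^ 10 * Δ ≤ n) :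
    2 * (2 * l) ^ 2 * Δ ≤ n / (l + 1) ^ 8 := by
  rw [Nat.le_div_iff_mul_le (by positivity)]
  calc 2 * (2 * l) ^ 2 * Δ * (l + 1) ^ 8 = 8 * l ^ 2 * (l + 1) ^ 8 * Δ := by ring
    _ ≤ 9 * (l + 1) ^ 2 * (l + 1) ^ 8 * Δ := by gcongr <;> omega
    _ ≤ n := by rwa [mul_assoc 9, ← pow_add]

theorem two_mul_div_pow_mul_add_one_le {n : ℕ} (l : ℕ) (hn : 4 ≤ n) :
    2 * (n / (l + 1) ^ 8 * (2 * l) + 1) ≤ n := by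
  have hbernoulli : 8 * l ≤ (l + 1) ^ 8 := by
    have h := one_add_mul_le_pow (a := (l : ℤ)) (by omega) 8
    zify
    push_cast at h
    rw [add_comm (l : ℤ)]
    omega
  have hle : 8 * l * (n / (l + 1) ^ 8) ≤ n :=
    (Nat.mul_le_mul_right _ hbernoulli).trans (Nat.mul_div_le n _)
  nlinarith

theorem three_mul_add_mul_mul_pow_le {l Δ j n : ℕ} (hΔ : 2 * (2 * l) ^ 2 * Δ ≤ j)
    (hj : (l + 1) ^ 8 * j ≤ n) : (3 * j + Δ) * (2 * l) * (l + 1) ^ 7 ≤ 6 * n := by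
  have hΔj : 2 * l * Δ ≤ j :=
    calc 2 * l * Δ ≤ 2 * (2 * l) ^ 2 * Δ := by
          gcongr
          nlinarith [Nat.le_self_pow two_ne_zero (2 * l)]
      _ ≤ j := hΔ
  calc (3 * j + Δ) * (2 * l) * (l + 1) ^ 7 = (6 * j * l + 2 * l * Δ) * (l + 1) ^ 7 := by ring
    _ ≤ (6 * j * l + 6 * j) * (l + 1) ^ 7 := Nat.mul_le_mul_right _ (by omega)
    _ = 6 * ((l + 1) ^ 8 * j) := by ring
    _ ≤ 6 * n := by gcongr

end Parameters

theorem exists_good_permutation_general (k : ℕ) (hk : 0 < k) :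
    ∃ n₀ : ℕ, ∀ (V : Type*) [Fintype V] [DecidableEq V], n₀ ≤ Fintype.card V →
      ∀ D : Finset (Finset V), IsLinearFamily D → (∀ S ∈ D, #S ≤ 2 * k - 1) →
        ∀ G : SimpleGraph V,
          (∀ v, (Fintype.card V : ℝ) * (1 - 1 / (9 * (k : ℝ) ^ 10)) ≤
            ((G.neighborSet v).ncard : ℝ)) →
          ∃ π : Perm V, ∀ v,
            (((spoiledGraph G (D.image (image π))).neighborSet v).ncard : ℝ) ≤
              6 * (Fintype.card V : ℝ) / (k : ℝ) ^ 7 := by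
  classical
  obtain ⟨n₁, hn₁⟩ := eventually_atTop.1 (eventually_lt_two_pow_div (pow_pos hk 8).ne')
  refine ⟨max n₁ 4, fun V _ _ hn D hD hDcard G hG ↦ ?_⟩
  obtain ⟨l, rfl⟩ := Nat.exists_eq_add_one.2 hk
  have hΔ : 9 * (l + 1) ^ 10 * Gᶜ.maxDegree ≤ Fintype.card V := by
    have h := maxDegree_compl_le_of_le_ncard_neighborSet (by positivity) hG
    rw [mul_one_div, le_div_iff₀' (by positivity)] at h
    exact_mod_cast h
  have hdeg := two_mul_sq_mul_le_div_pow hΔ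
  obtain ⟨π, hπ⟩ := hD.exists_perm_ncard_neighborSet_spoiledGraph_le
    (fun S hS ↦ (hDcard S hS).trans (by omega)) hdeg
    (two_mul_div_pow_mul_add_one_le l (le_of_max_le_right hn)) (hn₁ _ (le_of_max_le_left hn))
  refine ⟨π, fun v ↦ ?_⟩
  rw [le_div_iff₀ (by positivity)]
  exact_mod_cast (Nat.mul_le_mul_right _ (hπ v)).trans
    (three_mul_add_mul_mul_pow_le hdeg (Nat.mul_div_le _ _))

/-- Let `k ≥ 3` and `t = 2k-1`. There exists `n₀` such that for every `n ≥ n₀` with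
`n ≡ 1 (mod t(t-1))`, every `t`-design `D` on `[n]` and every graph `G` on `{1,…,n}` with
minimum degree at least `n·(1 - 1/(9k^10))`, there is a permutation `π` of `{1,…,n}` such that
the graph whose edges are the edges of `G` lying inside some block `π(S)`, `S ∈ D`, with
`G[π(S)]` not complete, has maximum degree at most `6n/k⁷`. -/
theorem exists_good_permutation (k : ℕ) (hk : 3 ≤ k) :
    ∃ n₀ : ℕ, ∀ n : ℕ, n₀ ≤ n → n % ((2 * k - 1) * (2 * k - 2)) = 1 →
      ∀ D : Finset (Finset (Fin n)),
        (∀ S ∈ D, S.card = 2 * k - 1) →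
        (∀ a b : Fin n, a ≠ b → ∃! S, S ∈ D ∧ a ∈ S ∧ b ∈ S) →
        ∀ G : SimpleGraph (Fin n),
          (∀ v, (n : ℝ) * (1 - 1 / (9 * (k : ℝ) ^ 10)) ≤ ((G.neighborSet v).ncard : ℝ)) →
          ∃ π : Equiv.Perm (Fin n),
            ∀ v : Fin n,
              (({u : Fin n | s(v, u) ∈ G.edgeSet ∧ ∃ S ∈ D,
                  ¬ G.IsClique (π '' (S : Set (Fin n))) ∧
                  ∀ x ∈ s(v, u), x ∈ π '' (S : Set (Fin n))}.ncard : ℝ)) ≤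
                6 * (n : ℝ) / (k : ℝ) ^ 7 := by
  obtain ⟨n₀, hn₀⟩ := exists_good_permutation_general k (by omega)
  refine ⟨n₀, fun n hn _ D hDcard hDpair G hG ↦ ?_⟩
  simpa only [neighborSet_spoiledGraph_image, Fintype.card_fin] using
    hn₀ (Fin n) (by simpa using hn) D (.of_existsUnique hDpair) (fun S hS ↦ (hDcard S hS).le) G
      (by simpa only [Fintype.card_fin] using hG)
end

section
/- For every integer k ≥ 3 and every ε > 0 there exist δ > 0 and infinitely many n for which there is a graph G on n vertices with minimum degree at least n·(1 - 1/(k+1)) - εn such that ν*_{K_k}(G) ≤ (1-δ)·e(G)/C(k,2). (This shows c_{K_k} ≤ 1/(k+1).) -/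
/-- A fractional `H`-packing of `G`: a function `ψ` from the copies of `H` in `G` to `[0,1]`
such that for each edge `e` of `G`, the sum of `ψ` over the copies of `H` containing `e`
is at most `1`. -/
def IsFracPacking {α β : Type*} (G : SimpleGraph α) (H : SimpleGraph β)
    (ψ : G.Subgraph → ℝ) : Prop :=
  (∀ c, 0 ≤ ψ c ∧ ψ c ≤ 1) ∧ (∀ c, ¬ c.IsCopy H → ψ c = 0) ∧
  ∀ e ∈ G.edgeSet, (∑ᶠ c ∈ {c : G.Subgraph | c.IsCopy H ∧ e ∈ c.edgeSet}, ψ c) ≤ 1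

/-!
By linear programming duality it suffices to find one graph whose copies of `K_k` have a fractional
cover by edges of total weight less than `e(G)`; blowing it up gives infinitely many graphs with the
same constant.

Split the vertices into `k + 1` parts of size `L`, pair up the parts by an involution with at most
one fixed part, and join any two vertices unless they lie in paired parts; the fixed part, paired
with itself, is independent. Let `m ∈ {k, k + 1}` be the number of moved parts. Give weight `m - 1`
to the edges inside a moved part, `0` to the edges between two moved parts and `1` to the edges at
the fixed part. A `K_k` has `t ∈ {m - 1, m}` vertices in moved parts, which occupy at most `m / 2`
of them. Since `x ^ 2 ≥ 3 * x - 2`, with equality for `x ∈ {1, 2}`, its total weight exceeds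
`C(k,2)` by at least `(m - t) * (1 - (m - t)) / 2 = 0`. Compared with unit weights, a vertex of a
moved part gains `(m - 2) * (L - 1)` and loses `(m - 2) * L`, so the total is less than `e(G)`.
-/

section

open Finset SimpleGraph

section WeakDuality

variable {V β : Type*} {G : SimpleGraph V} {H : SimpleGraph β} {ψ : G.Subgraph → ℝ}

theorem IsFracPacking.finsum_mem_eq_sum [Fintype G.Subgraph] (hψ : IsFracPacking G H ψ) :
    ∑ᶠ c ∈ {c : G.Subgraph | c.IsCopy H}, ψ c = ∑ c, ψ c := by
  refine finsum_mem_eq_sum_of_inter_support_eq ψ ?_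
  rw [coe_univ, Set.univ_inter, Set.inter_eq_right]
  exact fun c hc => of_not_not fun hcopy => hc (hψ.2.1 c hcopy)

open scoped Classical in
theorem IsFracPacking.sum_filter_adj_le_one [Fintype G.Subgraph] (hψ : IsFracPacking G H ψ)
    {u v : V} (huv : G.Adj u v) : ∑ c : G.Subgraph with c.Adj u v, ψ c ≤ 1 := by
  refine le_of_eq_of_le (finsum_mem_eq_sum_of_inter_support_eq ψ ?_).symm (hψ.2.2 s(u, v) huv)
  ext c
  have hcopy : ψ c ≠ 0 → c.IsCopy H := fun hc => of_not_not fun h => hc (hψ.2.1 c h)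
  simpa using fun hc _ => hcopy hc

open scoped Classical in
/- Weak linear programming duality: `w / B` is a fractional cover of the copies of `H` by edges. -/
theorem IsFracPacking.mul_finsum_le [Fintype V] (hψ : IsFracPacking G H ψ) {w : V → V → ℝ}
    (hw : ∀ u v, 0 ≤ w u v) {B : ℝ}
    (hB : ∀ c : G.Subgraph, c.IsCopy H → B ≤ ∑ u, ∑ v, if c.Adj u v then w u v else 0) :
    B * ∑ᶠ c ∈ {c : G.Subgraph | c.IsCopy H}, ψ c ≤
      ∑ u, ∑ v, if G.Adj u v then w u v else 0 := by
  have := Fintype.ofFinite G.Subgraph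
  rw [hψ.finsum_mem_eq_sum, mul_sum]
  calc
    ∑ c, B * ψ c ≤ ∑ c : G.Subgraph, (∑ u, ∑ v, if c.Adj u v then w u v else 0) * ψ c := by
      refine sum_le_sum fun c _ => ?_
      by_cases hc : c.IsCopy H
      · exact mul_le_mul_of_nonneg_right (hB c hc) (hψ.1 c).1
      · simp [hψ.2.1 c hc]
    _ = ∑ u, ∑ v, w u v * ∑ c : G.Subgraph with c.Adj u v, ψ c := by
      simp_rw [sum_mul, mul_sum, sum_filter, ite_mul, zero_mul]
      rw [sum_comm]
      exact sum_congr rfl fun u _ => sum_comm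
    _ ≤ ∑ u, ∑ v, if G.Adj u v then w u v else 0 := by
      refine sum_le_sum fun u _ => sum_le_sum fun v _ => ?_
      split_ifs with huv
      · exact mul_le_of_le_one_right (hw u v) (hψ.sum_filter_adj_le_one huv)
      · rw [sum_eq_zero, mul_zero]
        exact fun c hc => absurd (mem_filter.1 hc).2.adj_sub huv

end WeakDuality

theorem exists_isNClique_of_isCopy_top {V : Type*} [Finite V] {G : SimpleGraph V} {k : ℕ}
    {c : G.Subgraph} (hc : c.IsCopy (⊤ : SimpleGraph (Fin k))) :
    ∃ S : Finset V, G.IsNClique k S ∧ ∀ u v, c.Adj u v ↔ u ∈ S ∧ v ∈ S ∧ u ≠ v := by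
  obtain ⟨f⟩ := hc
  have hadj (u v : V) : c.Adj u v ↔ u ∈ c.verts ∧ v ∈ c.verts ∧ u ≠ v := by
    refine ⟨fun h => ⟨h.fst_mem, h.snd_mem, h.ne⟩, fun ⟨hu, hv, hne⟩ => ?_⟩
    have hcoe : c.coe.Adj ⟨u, hu⟩ ⟨v, hv⟩ := by
      rw [← f.map_adj_iff, top_adj, f.injective.ne_iff]
      simpa using hne
    exact hcoe
  refine ⟨c.verts.toFinite.toFinset, ⟨fun u hu v hv hne => ?_, ?_⟩, by simpa using hadj⟩
  · exact ((hadj u v).2 ⟨by simpa using hu, by simpa using hv, hne⟩).adj_sub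
  · rw [← Set.ncard_eq_toFinset_card, ← Nat.card_coe_set_eq, Nat.card_congr f.toEquiv,
      Nat.card_fin]

open scoped Classical in
theorem ncard_neighborSet_eq_sum {V : Type*} [Fintype V] (G : SimpleGraph V) (u : V) :
    ((G.neighborSet u).ncard : ℝ) = ∑ v, if G.Adj u v then 1 else 0 := by
  rw [sum_boole, Set.ncard_eq_toFinset_card']
  congr 2
  ext v
  simp

open scoped Classical in
theorem two_mul_ncard_edgeSet_eq_sum {V : Type*} [Fintype V] (G : SimpleGraph V) :
    2 * (G.edgeSet.ncard : ℝ) = ∑ u, ∑ v, if G.Adj u v then 1 else 0 := by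
  have hdegree (u : V) : G.degree u = (G.neighborSet u).ncard := by
    rw [Set.ncard_eq_toFinset_card', ← card_neighborFinset_eq_degree, neighborFinset_def]
  have hdouble := G.sum_degrees_eq_twice_card_edges
  rw [edgeFinset, ← Set.ncard_eq_toFinset_card'] at hdouble
  simp_rw [← ncard_neighborSet_eq_sum, ← hdegree]
  exact_mod_cast hdouble.symm

/-- A weighting of the ordered pairs of vertices of `G` that is supported on the edges, at least
`-1` everywhere, and of nonnegative total weight on every `k`-clique. Adding it to the weighting
that is constantly `1` on the edges gives a fractional cover of the `k`-cliques of `G`, so its total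
weight bounds how far a fractional `K_k`-packing can be from covering all edges.
Each edge is counted twice, once for each orientation, in all the sums. -/
structure IsCliqueCorrection {V : Type*} (G : SimpleGraph V) (k : ℕ) (φ : V → V → ℝ) : Prop where
  eq_zero : ∀ u v, ¬ G.Adj u v → φ u v = 0
  neg_one_le : ∀ u v, -1 ≤ φ u v
  sum_nonneg : ∀ S : Finset V, G.IsNClique k S → 0 ≤ ∑ u ∈ S, ∑ v ∈ S, φ u v

namespace IsCliqueCorrection

variable {V : Type*} {G : SimpleGraph V} {k : ℕ} {φ : V → V → ℝ}

open scoped Classical in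
theorem sum_one_add [Fintype V] (hφ : IsCliqueCorrection G k φ) :
    (∑ u, ∑ v, if G.Adj u v then 1 + φ u v else 0) =
      2 * (G.edgeSet.ncard : ℝ) + ∑ u, ∑ v, φ u v := by
  simp_rw [two_mul_ncard_edgeSet_eq_sum, ← sum_add_distrib]
  refine sum_congr rfl fun u _ => sum_congr rfl fun v _ => ?_
  split_ifs with huv
  · rfl
  · rw [hφ.eq_zero u v huv, add_zero]

open scoped Classical in
theorem le_sum_copy [Fintype V] (hφ : IsCliqueCorrection G k φ) {c : G.Subgraph}
    (hc : c.IsCopy (⊤ : SimpleGraph (Fin k))) :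
    (k : ℝ) * (k - 1) ≤ ∑ u, ∑ v, if c.Adj u v then 1 + φ u v else 0 := by
  obtain ⟨S, hS, hadj⟩ := exists_isNClique_of_isCopy_top hc
  have hsum : ∑ p ∈ S.offDiag, φ p.1 p.2 = ∑ u ∈ S, ∑ v ∈ S, φ u v := by
    rw [← sum_product']
    refine sum_subset (fun p hp => mem_product.2 ?_) fun p hp hdiag => hφ.eq_zero _ _ ?_
    · exact ⟨(mem_offDiag.1 hp).1, (mem_offDiag.1 hp).2.1⟩
    · have heq : p.1 = p.2 := by simpa [mem_product.1 hp] using hdiag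
      exact heq ▸ G.irrefl
  have hcard : (#S.offDiag : ℝ) = k * (k - 1) := by
    rw [offDiag_card, hS.card_eq, Nat.cast_sub (Nat.le_mul_self k)]
    push_cast
    ring
  calc
    (k : ℝ) * (k - 1) ≤ k * (k - 1) + ∑ u ∈ S, ∑ v ∈ S, φ u v :=
      le_add_of_nonneg_right (hφ.sum_nonneg S hS)
    _ = ∑ p ∈ S.offDiag, (1 + φ p.1 p.2) := by
      rw [sum_add_distrib, hsum, sum_const, nsmul_one, hcard]
    _ = ∑ u, ∑ v, if c.Adj u v then 1 + φ u v else 0 := by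
      rw [← Fintype.sum_prod_type', ← sum_filter]
      congr 1
      ext ⟨u, v⟩
      simp [hadj]

theorem mul_finsum_le [Fintype V] (hφ : IsCliqueCorrection G k φ) {ψ : G.Subgraph → ℝ}
    (hψ : IsFracPacking G (⊤ : SimpleGraph (Fin k)) ψ) :
    (k : ℝ) * (k - 1) * ∑ᶠ c ∈ {c : G.Subgraph | c.IsCopy (⊤ : SimpleGraph (Fin k))}, ψ c ≤
      2 * (G.edgeSet.ncard : ℝ) + ∑ u, ∑ v, φ u v := by
  classical
  rw [← hφ.sum_one_add]
  exact hψ.mul_finsum_le (fun u v => by linarith [hφ.neg_one_le u v]) fun c => hφ.le_sum_copy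

theorem edgeSet_nonneg [Fintype V] (hφ : IsCliqueCorrection G k φ) :
    0 ≤ 2 * (G.edgeSet.ncard : ℝ) + ∑ u, ∑ v, φ u v := by
  classical
  rw [← hφ.sum_one_add]
  refine Finset.sum_nonneg fun u _ => Finset.sum_nonneg fun v _ => ?_
  split_ifs
  · linarith [hφ.neg_one_le u v]
  · rfl

theorem comap {W : Type*} (hφ : IsCliqueCorrection G k φ) (f : W → V) :
    IsCliqueCorrection (G.comap f) k fun x y => φ (f x) (f y) where
  eq_zero x y := hφ.eq_zero (f x) (f y)
  neg_one_le x y := hφ.neg_one_le (f x) (f y)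
  sum_nonneg S hS := by
    classical
    have hinj : Set.InjOn f S := fun x hx y hy hxy =>
      of_not_not fun hne => G.ne_of_adj (hS.isClique hx hy hne) hxy
    have hclique : G.IsNClique k (S.image f) := by
      refine ⟨?_, (card_image_of_injOn hinj).trans hS.card_eq⟩
      rw [coe_image]
      rintro _ ⟨x, hx, rfl⟩ _ ⟨y, hy, rfl⟩ hne
      exact hS.isClique hx hy (ne_of_apply_ne f hne)
    simpa only [sum_image hinj] using hφ.sum_nonneg _ hclique

end IsCliqueCorrection

section BlowUp

variable {V W ι : Type*} [Fintype ι] (e : W ≃ V × ι)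

theorem sum_comp_fst_equiv [Fintype V] [Fintype W] (g : V → ℝ) :
    ∑ x, g (e x).1 = Fintype.card ι * ∑ v, g v := by
  rw [e.sum_comp fun p => g p.1, Fintype.sum_prod_type, mul_sum]
  simp

theorem ncard_neighborSet_comap_fst_equiv [Finite V] (G : SimpleGraph V) (x : W) :
    (((G.comap fun y => (e y).1).neighborSet x).ncard : ℝ) =
      Fintype.card ι * ((G.neighborSet (e x).1).ncard : ℝ) := by
  classical
  have := Fintype.ofFinite V
  have := Fintype.ofEquiv _ e.symm
  rw [ncard_neighborSet_eq_sum, ncard_neighborSet_eq_sum]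
  exact sum_comp_fst_equiv e fun v => if G.Adj (e x).1 v then 1 else 0

theorem sum_sum_comp_fst_equiv [Fintype V] [Fintype W] (φ : V → V → ℝ) :
    ∑ x, ∑ y, φ (e x).1 (e y).1 = (Fintype.card ι : ℝ) ^ 2 * ∑ u, ∑ v, φ u v := by
  simp_rw [sum_comp_fst_equiv e (φ _)]
  rw [← mul_sum, sum_comp_fst_equiv e fun u => ∑ v, φ u v]
  ring

theorem two_mul_ncard_edgeSet_comap_fst_equiv [Finite V] (G : SimpleGraph V) :
    2 * ((G.comap fun y => (e y).1).edgeSet.ncard : ℝ) =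
      (Fintype.card ι : ℝ) ^ 2 * (2 * G.edgeSet.ncard) := by
  classical
  have := Fintype.ofFinite V
  have := Fintype.ofEquiv _ e.symm
  rw [two_mul_ncard_edgeSet_eq_sum, two_mul_ncard_edgeSet_eq_sum]
  exact sum_sum_comp_fst_equiv e fun u v => if G.Adj u v then 1 else 0

end BlowUp

theorem IsCliqueCorrection.finsum_le_of_blowUp {V W ι : Type*} [Fintype V] [Finite ι]
    {G : SimpleGraph V} {k : ℕ} {φ : V → V → ℝ} (hφ : IsCliqueCorrection G k φ) (hk : 2 ≤ k)
    (hG : 0 < G.edgeSet.ncard) (e : W ≃ V × ι) {ψ : (G.comap fun x => (e x).1).Subgraph → ℝ}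
    (hψ : IsFracPacking (G.comap fun x => (e x).1) (⊤ : SimpleGraph (Fin k)) ψ) :
    ∑ᶠ c ∈ {c : (G.comap fun x => (e x).1).Subgraph | c.IsCopy (⊤ : SimpleGraph (Fin k))}, ψ c ≤
      (1 - -(∑ u, ∑ v, φ u v) / (2 * G.edgeSet.ncard)) *
        (((G.comap fun x => (e x).1).edgeSet.ncard : ℝ) / ((k : ℝ) * (k - 1) / 2)) := by
  have hk2 : (2 : ℝ) ≤ k := by exact_mod_cast hk
  have hkk : 0 < (k : ℝ) * (k - 1) := mul_pos (by linarith) (by linarith)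
  have := Fintype.ofFinite ι
  have := Fintype.ofEquiv _ e.symm
  have hdual := (hφ.comap fun x => (e x).1).mul_finsum_le hψ
  rw [sum_sum_comp_fst_equiv] at hdual
  rw [div_div_eq_mul_div, ← mul_div_assoc, le_div_iff₀' hkk]
  refine hdual.trans_eq ?_
  rw [mul_comm _ (2 : ℝ), two_mul_ncard_edgeSet_comap_fst_equiv]
  field_simp
  ring

theorem IsCliqueCorrection.exists_blowUp {V : Type*} [Fintype V] {G : SimpleGraph V} {k : ℕ}
    {φ : V → V → ℝ} (hφ : IsCliqueCorrection G k φ) (hneg : ∑ u, ∑ v, φ u v < 0) (hk : 2 ≤ k)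
    {d : ℝ} (hd : ∀ v, Fintype.card V * d ≤ ((G.neighborSet v).ncard : ℝ)) :
    ∃ δ : ℝ, 0 < δ ∧ ∀ m : ℕ, ∃ n : ℕ, m ≤ n ∧ ∃ G' : SimpleGraph (Fin n),
      (∀ v, n * d ≤ ((G'.neighborSet v).ncard : ℝ)) ∧
      ∀ ψ : G'.Subgraph → ℝ, IsFracPacking G' (⊤ : SimpleGraph (Fin k)) ψ →
        (∑ᶠ c ∈ {c : G'.Subgraph | c.IsCopy (⊤ : SimpleGraph (Fin k))}, ψ c) ≤
          (1 - δ) * ((G'.edgeSet.ncard : ℝ) / ((k : ℝ) * ((k : ℝ) - 1) / 2)) := by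
  have hE : 0 < (G.edgeSet.ncard : ℝ) := by linarith [hφ.edgeSet_nonneg]
  have : Nonempty V := not_isEmpty_iff.1 fun _ => by simp at hneg
  refine ⟨-(∑ u, ∑ v, φ u v) / (2 * G.edgeSet.ncard), div_pos (neg_pos.2 hneg) (by positivity),
    fun m => ?_⟩
  let e : Fin (Fintype.card V * m) ≃ V × Fin m := (Fintype.equivFinOfCardEq (by simp)).symm
  refine ⟨Fintype.card V * m, Nat.le_mul_of_pos_left m Fintype.card_pos, G.comap fun x => (e x).1,
    fun x => ?_, fun ψ hψ => hφ.finsum_le_of_blowUp hk (by exact_mod_cast hE) e hψ⟩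
  rw [ncard_neighborSet_comap_fst_equiv, Fintype.card_fin, Nat.cast_mul,
    mul_comm (Fintype.card V : ℝ), mul_assoc]
  gcongr
  exact hd _

section PairedParts

variable {ι : Type*} {σ : Equiv.Perm ι}

/-- The graph on parts `{i} × κ` in which any two distinct vertices are adjacent unless their parts
are exchanged by the involution `σ`. A part fixed by `σ` is thus independent, while a moved part is
complete and unjoined to its partner only. When `σ` fixes at most one part, fractional packings of
cliques of order `#ι - 1` waste a constant fraction of the edges. -/
def pairedParts (hσ : Function.Involutive σ) (κ : Type*) : SimpleGraph (ι × κ) where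
  Adj u v := u ≠ v ∧ σ u.1 ≠ v.1
  symm := ⟨fun _ _ ⟨hne, hσne⟩ => ⟨hne.symm, fun h => hσne (h ▸ hσ _)⟩⟩
  loopless := ⟨fun _ h => h.1 rfl⟩

theorem card_le_ncard_neighborSet_pairedParts_add [Fintype ι] {κ : Type*} [Fintype κ]
    (hσ : Function.Involutive σ) (u : ι × κ) :
    Fintype.card (ι × κ) ≤ ((pairedParts hσ κ).neighborSet u).ncard + (Fintype.card κ + 1) := by
  have hcompl : ((pairedParts hσ κ).neighborSet u)ᶜ = insert u (Set.range (Prod.mk (σ u.1))) := by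
    ext ⟨j, y⟩
    simp only [Set.mem_compl_iff, mem_neighborSet, pairedParts, Set.mem_insert_iff, Set.mem_range,
      Prod.mk.injEq]
    grind
  rw [← Nat.card_eq_fintype_card, ← Set.ncard_add_ncard_compl ((pairedParts hσ κ).neighborSet u),
    hcompl]
  gcongr
  refine (Set.ncard_insert_le _ _).trans_eq ?_
  rw [Set.ncard_range_of_injective (Prod.mk_right_injective _), Nat.card_eq_fintype_card]

theorem mul_le_ncard_neighborSet_pairedParts [Fintype ι] {κ : Type*} [Fintype κ] {ε : ℝ}
    (hσ : Function.Involutive σ) (hε : 1 ≤ ε * Fintype.card κ) (u : ι × κ) :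
    (Fintype.card (ι × κ) : ℝ) * (1 - 1 / Fintype.card ι - ε) ≤
      ((pairedParts hσ κ).neighborSet u).ncard := by
  have hι : (1 : ℝ) ≤ Fintype.card ι := by exact_mod_cast Fintype.card_pos_iff.2 ⟨u.1⟩
  have hcodegree : (Fintype.card (ι × κ) : ℝ) ≤
      ((pairedParts hσ κ).neighborSet u).ncard + (Fintype.card κ + 1) := by
    exact_mod_cast card_le_ncard_neighborSet_pairedParts_add hσ u
  calc
    (Fintype.card (ι × κ) : ℝ) * (1 - 1 / Fintype.card ι - ε) =
        Fintype.card (ι × κ) - Fintype.card κ - Fintype.card ι * (ε * Fintype.card κ) := by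
      rw [Fintype.card_prod]
      push_cast
      field_simp
    _ ≤ Fintype.card (ι × κ) - Fintype.card κ - 1 := by
      gcongr
      exact one_le_mul_of_one_le_of_one_le hι hε
    _ ≤ ((pairedParts hσ κ).neighborSet u).ncard := by linarith

theorem two_mul_card_le_card_support [Fintype ι] [DecidableEq ι] {I : Finset ι}
    (hI : I ⊆ σ.support) (hdisj : Disjoint I (I.map σ.toEmbedding)) : 2 * #I ≤ #σ.support := by
  calc
    2 * #I = #(I ∪ I.map σ.toEmbedding) := by
      rw [card_union_of_disjoint hdisj, card_map, two_mul]
    _ ≤ #σ.support := by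
      refine card_le_card (union_subset hI fun j hj => ?_)
      obtain ⟨i, hi, rfl⟩ := mem_map.1 hj
      exact Equiv.Perm.apply_mem_support.2 (hI hi)

theorem three_mul_card_le_sum_card_fiber_add {α : Type*} [DecidableEq ι] (T : Finset α)
    (f : α → ι) : 3 * #T ≤ ∑ u ∈ T, #{v ∈ T | f v = f u} + 2 * #(T.image f) := by
  have hquadratic (x : ℕ) : 3 * x ≤ x * x + 2 := by
    rcases x with _ | _ | x
    · simp
    · simp
    · nlinarith
  calc
    3 * #T = ∑ i ∈ T.image f, 3 * #{v ∈ T | f v = i} := by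
      rw [← mul_sum, ← card_eq_sum_card_image]
    _ ≤ ∑ i ∈ T.image f, (#{v ∈ T | f v = i} * #{v ∈ T | f v = i} + 2) :=
      sum_le_sum fun i _ => hquadratic _
    _ = ∑ u ∈ T, #{v ∈ T | f v = f u} + 2 * #(T.image f) := by
      simp_rw [sum_add_distrib, sum_const, sum_comp (fun i => #{v ∈ T | f v = i}) f, smul_eq_mul,
        mul_comm]

variable [Fintype ι] [DecidableEq ι] {κ : Type*} {hσ : Function.Involutive σ}

open scoped Classical in
/-- The correction turning unit weights on `pairedParts hσ κ` into a fractional cover of its cliques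
of order `#ι - 1` when `σ` fixes at most one part: with `m` parts moved by `σ`, it is `m - 2` on the
edges inside a moved part, `-1` on the edges between two moved parts, and `0` on the edges at a
fixed part and off the edges. -/
noncomputable def pairedPartsCorrection (hσ : Function.Involutive σ) (u v : ι × κ) : ℝ :=
  if (pairedParts hσ κ).Adj u v ∧ u.1 ∈ σ.support ∧ v.1 ∈ σ.support then
    if u.1 = v.1 then #σ.support - 2 else -1
  else 0

theorem pairedPartsCorrection_of_mem_support [DecidableEq κ] {u v : ι × κ} (hu : u.1 ∈ σ.support)
    (hv : v.1 ∈ σ.support) :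
    pairedPartsCorrection hσ u v = (#σ.support - 1) * (if u.1 = v.1 then 1 else 0) +
      (if σ u.1 = v.1 then 1 else 0) - (#σ.support - 2) * (if u = v then 1 else 0) - 1 := by
  have hσu : σ u.1 ≠ u.1 := Equiv.Perm.mem_support.1 hu
  unfold pairedPartsCorrection
  by_cases huv : u = v
  · subst huv
    simp only [pairedParts, ne_eq, SimpleGraph.irrefl, Equiv.Perm.mem_support, hσu,
      not_false_eq_true, and_self, and_true, ↓reduceIte, mul_one, add_zero, sub_sub_sub_cancel_left]
    ring
  by_cases hpart : u.1 = v.1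
  · have hσv : σ v.1 ≠ v.1 := hpart ▸ hσu
    simp only [pairedParts, ne_eq, huv, not_false_eq_true, hpart, hσv, and_self, hv, ↓reduceIte,
      mul_one, add_zero, mul_zero, sub_zero]
    ring
  · by_cases hσv : σ u.1 = v.1 <;> simp [pairedParts, huv, hu, hv, hpart, hσv]

theorem sum_pairedPartsCorrection_nonneg {T : Finset (ι × κ)}
    (hT : (pairedParts hσ κ).IsClique T) (hsupp : ∀ u ∈ T, u.1 ∈ σ.support)
    (hlower : #σ.support ≤ #T + 1) (hupper : #T ≤ #σ.support) (hpos : 1 ≤ #σ.support) :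
    0 ≤ ∑ u ∈ T, ∑ v ∈ T, pairedPartsCorrection hσ u v := by
  classical
  have hne {u v : ι × κ} (hu : u ∈ T) (hv : v ∈ T) : σ u.1 ≠ v.1 := by
    rcases eq_or_ne u v with rfl | huv
    · exact Equiv.Perm.mem_support.1 (hsupp u hu)
    · exact (hT hu hv huv).2
  have himage : 2 * #(T.image Prod.fst) ≤ #σ.support := by
    refine two_mul_card_le_card_support (image_subset_iff.2 hsupp) ?_
    simp only [Finset.disjoint_left, mem_image, mem_map, not_exists, not_and]
    rintro _ ⟨v, hv, rfl⟩ _ ⟨u, hu, rfl⟩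
    exact hne hu hv
  have hrow : ∀ u ∈ T, ∑ v ∈ T, pairedPartsCorrection hσ u v =
      (#σ.support - 1) * #{v ∈ T | v.1 = u.1} - (#σ.support - 2) - #T := fun u hu => by
    rw [sum_congr rfl fun v hv => pairedPartsCorrection_of_mem_support (hsupp u hu) (hsupp v hv),
      sum_congr rfl fun v hv => by rw [if_neg (hne hu hv), add_zero]]
    simp only [sum_sub_distrib, ← mul_sum, sum_ite_eq, if_pos hu, sum_boole, sum_const, nsmul_one,
      mul_one, eq_comm]
  have hfiber : 3 * (#T : ℝ) - #σ.support ≤ ∑ u ∈ T, (#{v ∈ T | v.1 = u.1} : ℝ) := by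
    rw [sub_le_iff_le_add]
    exact_mod_cast (three_mul_card_le_sum_card_fiber_add T Prod.fst).trans (by gcongr)
  have hlower' : (#σ.support : ℝ) ≤ #T + 1 := by exact_mod_cast hlower
  have hupper' : (#T : ℝ) ≤ #σ.support := by exact_mod_cast hupper
  have hpos' : (1 : ℝ) ≤ #σ.support := by exact_mod_cast hpos
  calc
    (0 : ℝ) ≤ (#σ.support - #T) * (1 - (#σ.support - #T)) :=
      mul_nonneg (by linarith) (by linarith)
    _ = (#σ.support - 1) * (3 * #T - #σ.support) - #T * (#σ.support - 2) - #T * #T := by ring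
    _ ≤ (#σ.support - 1) * ∑ u ∈ T, (#{v ∈ T | v.1 = u.1} : ℝ) -
        #T * (#σ.support - 2) - #T * #T := by
      gcongr
    _ = ∑ u ∈ T, ∑ v ∈ T, pairedPartsCorrection hσ u v := by
      rw [sum_congr rfl hrow]
      simp only [sum_sub_distrib, ← mul_sum, sum_const, nsmul_eq_mul]
      ring

theorem card_filter_notMem_support_le {S : Finset (ι × κ)} (hS : (pairedParts hσ κ).IsClique S) :
    #{u ∈ S | u.1 ∉ σ.support} ≤ Fintype.card ι - #σ.support := by
  rw [← card_compl]
  refine card_le_card_of_injOn Prod.fst (fun u hu => by simp_all) fun u hu v hv huv => ?_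
  obtain ⟨huS, hu⟩ := mem_filter.1 hu
  refine of_not_not fun hne => (hS huS (mem_filter.1 hv).1 hne).2 ?_
  rw [Equiv.Perm.notMem_support.1 hu, huv]

theorem isCliqueCorrection_pairedPartsCorrection {k : ℕ} (hι : Fintype.card ι = k + 1)
    (hsupp : k ≤ #σ.support) (hk : 1 ≤ k) :
    IsCliqueCorrection (pairedParts hσ κ) k (pairedPartsCorrection hσ) where
  eq_zero u v huv := if_neg fun h => huv h.1
  neg_one_le u v := by
    have : (1 : ℝ) ≤ #σ.support := by exact_mod_cast hk.trans hsupp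
    unfold pairedPartsCorrection
    split_ifs <;> linarith
  sum_nonneg S hS := by
    have hrestrict : ∑ u ∈ S, ∑ v ∈ S, pairedPartsCorrection hσ u v =
        ∑ u ∈ S with u.1 ∈ σ.support, ∑ v ∈ S with v.1 ∈ σ.support,
          pairedPartsCorrection hσ u v := by
      rw [sum_filter_of_ne]
      · refine sum_congr rfl fun u _ => (sum_filter_of_ne fun v _ hne => ?_).symm
        exact of_not_not fun hv => hne (if_neg fun h => hv h.2.2)
      · refine fun u _ hne => of_not_not fun hu => hne (sum_eq_zero fun v _ => ?_)
        exact if_neg fun h => hu h.2.1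
    have hsplit := card_filter_add_card_filter_not (s := S) fun u => u.1 ∈ σ.support
    have hfixed := card_filter_notMem_support_le hS.isClique
    have hcard := hS.card_eq
    have hle := card_le_univ σ.support
    rw [hrestrict]
    exact sum_pairedPartsCorrection_nonneg
      (hS.isClique.subset (coe_subset.2 (filter_subset _ S))) (by simp) (by lia) (by lia) (by lia)

variable [Fintype κ]

theorem sum_pairedPartsCorrection_right (u : ι × κ) :
    ∑ v, pairedPartsCorrection hσ u v =
      if u.1 ∈ σ.support then 2 - (#σ.support : ℝ) else 0 := by
  classical
  split_ifs with hu
  · have hrestrict : ∑ v, pairedPartsCorrection hσ u v =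
        ∑ v ∈ σ.support ×ˢ univ, pairedPartsCorrection hσ u v := by
      refine (sum_subset (subset_univ _) fun v _ hv => if_neg fun h => hv ?_).symm
      exact mem_product.2 ⟨h.2.2, mem_univ _⟩
    rw [hrestrict, sum_congr rfl fun v hv =>
      pairedPartsCorrection_of_mem_support hu (mem_product.1 hv).1]
    have hpart : ∀ i ∈ σ.support, (∑ v ∈ σ.support ×ˢ (univ : Finset κ),
        if i = v.1 then (1 : ℝ) else 0) = Fintype.card κ := fun i hi => by
      rw [sum_product_right]
      simp [hi]
    have hself : u ∈ σ.support ×ˢ (univ : Finset κ) := mem_product.2 ⟨hu, mem_univ _⟩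
    simp only [sum_sub_distrib, sum_add_distrib, ← mul_sum, hpart _ hu,
      hpart _ (Equiv.Perm.apply_mem_support.2 hu), sum_ite_eq, if_pos hself, sum_const,
      card_product, card_univ, nsmul_eq_mul]
    push_cast
    ring
  · exact sum_eq_zero fun v _ => if_neg fun h => hu h.2.1

theorem sum_sum_pairedPartsCorrection_neg [Nonempty κ] (hsupp : 3 ≤ #σ.support) :
    ∑ u : ι × κ, ∑ v, pairedPartsCorrection hσ u v < 0 := by
  simp_rw [sum_pairedPartsCorrection_right]
  have hcard : (3 : ℝ) ≤ #σ.support := by exact_mod_cast hsupp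
  obtain ⟨i, hi⟩ := card_pos.1 (hsupp.trans_lt' three_pos)
  refine sum_neg' (fun u _ => ?_) ⟨(i, Classical.arbitrary κ), mem_univ _, ?_⟩
  · split_ifs <;> linarith
  · rw [if_pos hi]
    linarith

end PairedParts

theorem le_card_support_revPerm (k : ℕ) : k ≤ #(Fin.revPerm (n := k + 1)).support := by
  have hfixed : #(Fin.revPerm (n := k + 1)).supportᶜ ≤ 1 := by
    refine card_le_one.2 fun i hi j hj => ?_
    simp only [mem_compl, Equiv.Perm.mem_support, not_not, Fin.revPerm_apply, Fin.ext_iff,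
      Fin.val_rev] at hi hj
    lia
  have := card_add_card_compl (Fin.revPerm (n := k + 1)).support
  rw [Fintype.card_fin] at this
  lia

end

/-- For every integer `k ≥ 3` and every `ε > 0` there exist `δ > 0` and infinitely many `n` for
which there is a graph `G` on `n` vertices with minimum degree at least `n·(1-1/(k+1)) - εn`
such that every fractional `K_k`-packing of `G` has total weight at most
`(1-δ)·e(G)/C(k,2)`. -/
theorem upper_bound_c_kk (k : ℕ) (hk : 3 ≤ k) (ε : ℝ) (hε : 0 < ε) :
    ∃ δ : ℝ, 0 < δ ∧ ∀ m : ℕ, ∃ n : ℕ, m ≤ n ∧ ∃ G : SimpleGraph (Fin n),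
      (∀ v, (n : ℝ) * (1 - 1 / ((k : ℝ) + 1)) - ε * (n : ℝ) ≤ ((G.neighborSet v).ncard : ℝ)) ∧
      ∀ ψ : G.Subgraph → ℝ, IsFracPacking G (⊤ : SimpleGraph (Fin k)) ψ →
        (∑ᶠ c ∈ {c : G.Subgraph | c.IsCopy (⊤ : SimpleGraph (Fin k))}, ψ c) ≤
          (1 - δ) * ((G.edgeSet.ncard : ℝ) / ((k : ℝ) * ((k : ℝ) - 1) / 2)) := by
  obtain ⟨L, hL⟩ := exists_nat_gt (1 / ε)
  have hεL : 1 ≤ ε * Fintype.card (Fin L) := by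
    rw [Fintype.card_fin]
    exact ((div_lt_iff₀' hε).1 hL).le
  have : NeZero L := ⟨by rintro rfl; norm_num at hεL⟩
  have hσ : Function.Involutive (Fin.revPerm (n := k + 1)) := Fin.rev_rev
  have hsupp := le_card_support_revPerm k
  have hcorrection := isCliqueCorrection_pairedPartsCorrection (κ := Fin L) (hσ := hσ)
    (Fintype.card_fin _) hsupp (by lia)
  have hneg := sum_sum_pairedPartsCorrection_neg (κ := Fin L) (hσ := hσ) (hk.trans hsupp)
  simpa only [Fintype.card_fin, Nat.cast_succ, mul_sub (_ : ℝ) (_ - _), mul_comm ε] using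
    hcorrection.exists_blowUp hneg (by lia) (mul_le_ncard_neighborSet_pairedParts hσ hεL)
end

section
/- Let H, K and G be graphs, where H and K each have at least one edge. If G has a fractional K-decomposition and K has a fractional H-decomposition, then G has a fractional H-decomposition. -/
/-- A fractional `H`-decomposition of `G`: an assignment of nonnegative real weights to the
copies of `H` in `G` such that for each edge `e` of `G`, the sum of the weights of the copies
of `H` containing `e` equals `1`. -/
def IsFracDecomp {α β : Type*} (G : SimpleGraph α) (H : SimpleGraph β)
    (ψ : G.Subgraph → ℝ) : Prop :=
  (∀ c, 0 ≤ ψ c) ∧ (∀ c, ¬ c.IsCopy H → ψ c = 0) ∧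
  ∀ e ∈ G.edgeSet, (∑ᶠ c ∈ {c : G.Subgraph | c.IsCopy H ∧ e ∈ c.edgeSet}, ψ c) = 1

/-!
Each copy of `K` in `G` inherits a fractional `H`-decomposition from `K`. Scaling it by the weight
of the copy and adding up over all copies, the load on an edge `e` of `G` is the sum, over the
copies of `K` containing `e`, of their weights, each multiplied by the load `1` that its own
decomposition puts on `e`; this total is `1`. On an infinite graph `∑ᶠ` is `0` when the support is
infinite, so a sum equal to `1` has finite support and the order of summation may be exchanged.
-/

open Function SimpleGraph

section Finsum

variable {ι κ R M : Type*}

lemma finsum_comm_of_hasFiniteSupport [AddCommMonoid M] {f : ι × κ → M} (hf : HasFiniteSupport f) :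
    ∑ᶠ i, ∑ᶠ j, f (i, j) = ∑ᶠ j, ∑ᶠ i, f (i, j) := by
  have hf_swap : HasFiniteSupport (f ∘ Prod.swap) := hf.comp_of_injective Prod.swap_injective
  calc ∑ᶠ i, ∑ᶠ j, f (i, j) = ∑ᶠ p, f p := (finsum_curry f hf).symm
    _ = ∑ᶠ p : κ × ι, (f ∘ Prod.swap) p := (finsum_comp_equiv (Equiv.prodComm κ ι)).symm
    _ = ∑ᶠ j, ∑ᶠ i, f (i, j) := finsum_curry _ hf_swap

lemma finsum_finsum_mul_of_finsum_eq_one [Semiring R] {w : ι → R} {v : ι → κ → R}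
    (hw : HasFiniteSupport w) (hv : ∀ i, w i ≠ 0 → ∑ᶠ j, v i j = 1) :
    ∑ᶠ j, ∑ᶠ i, w i * v i j = ∑ᶠ i, w i := by
  have hv_fin : ∀ i ∈ support w, HasFiniteSupport (v i) := fun i hi ↦
    hasFiniteSupport_of_finsum_eq_one (hv i hi)
  have hwv_fin : HasFiniteSupport fun p : ι × κ ↦ w p.1 * v p.1 p.2 := by
    refine (hw.biUnion fun i hi ↦ (hv_fin i hi).image (Prod.mk i)).subset fun p hp ↦ ?_
    exact Set.mem_biUnion (left_ne_zero_of_mul hp) ⟨p.2, right_ne_zero_of_mul hp, rfl⟩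
  rw [← finsum_comm_of_hasFiniteSupport hwv_fin]
  refine finsum_congr fun i ↦ ?_
  by_cases hi : w i = 0
  · simp [hi]
  · change ∑ᶠ j, w i * v i j = w i
    rw [← mul_finsum' _ _ (hv_fin i hi), hv i hi, mul_one]

lemma finsum_mem_finsum_mul_eq_one [Semiring R] {w : ι → R} {v : ι → κ → R} {s : Set ι} {t : Set κ}
    (hw : ∑ᶠ i ∈ s, w i = 1) (hv : ∀ i ∈ s, ∑ᶠ j ∈ t, v i j = 1)
    (h_supp : ∀ j ∈ t, ∀ i, w i * v i j ≠ 0 → i ∈ s) :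
    ∑ᶠ j ∈ t, ∑ᶠ i, w i * v i j = 1 := by
  simp only [finsum_mem_def] at hw hv ⊢
  have hv' : ∀ i, s.indicator w i ≠ 0 → ∑ᶠ j, t.indicator (v i) j = 1 := fun i hi ↦
    hv i (Set.mem_of_indicator_ne_zero hi)
  rw [← hw, ← finsum_finsum_mul_of_finsum_eq_one (hasFiniteSupport_of_finsum_eq_one hw) hv']
  refine finsum_congr fun j ↦ ?_
  by_cases hj : j ∈ t
  · simp only [Set.indicator_of_mem hj]
    refine finsum_congr fun i ↦ ?_
    by_cases hi : i ∈ s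
    · rw [Set.indicator_of_mem hi]
    · rw [Set.indicator_of_notMem hi, zero_mul, not_imp_comm.mp (h_supp j hj i) hi]
  · simp [Set.indicator_of_notMem hj]

lemma finsum_mem_extend_zero [AddCommMonoid M] {g : ι → κ} (hg : Injective g) (f : ι → M)
    (s : Set κ) : ∑ᶠ j ∈ s, extend g f 0 j = ∑ᶠ i ∈ g ⁻¹' s, f i := by
  have h_supp : ∀ j ∈ support (extend g f 0), j ∈ s ↔ j ∈ g '' (g ⁻¹' s) := by
    rw [support_extend_zero hg]
    rintro _ ⟨i, -, rfl⟩
    exact (hg.mem_set_image (s := g ⁻¹' s)).symm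
  rw [finsum_mem_inter_support_eq' _ _ _ h_supp, finsum_mem_image hg.injOn]
  simp only [hg.extend_apply]

end Finsum

section Copies

variable {α β γ : Type*} {G : SimpleGraph α} {H : SimpleGraph β} {K : SimpleGraph γ}

lemma subgraph_map_injective {f : K →g G} (hf : Injective f) : Injective (Subgraph.map f) := by
  refine LeftInverse.injective (g := Subgraph.comap f) fun d ↦ ?_
  ext u v
  · simp [hf.eq_iff]
  · simpa [Relation.map_apply, hf.eq_iff] using fun h : d.Adj u v ↦ h.adj_sub

lemma isCopy_iff_exists_toSubgraph_eq {c : G.Subgraph} :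
    c.IsCopy K ↔ ∃ f : Copy K G, f.toSubgraph = c := by
  have h_range := Set.ext_iff.mp (Copy.range_toSubgraph (A := K) (B := G)) c
  exact ⟨fun ⟨e⟩ ↦ h_range.mpr ⟨e.symm⟩, fun h ↦ (h_range.mp h).map Iso.symm⟩

lemma isCopy_map_iff (f : Copy K G) {d : K.Subgraph} :
    (d.map f.toHom).IsCopy H ↔ d.IsCopy H :=
  ⟨fun ⟨e⟩ ↦ ⟨(f.isoSubgraphMap d).trans e⟩, fun ⟨e⟩ ↦ ⟨(f.isoSubgraphMap d).symm.trans e⟩⟩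

/-- `ψ` is a fractional `H`-decomposition of the subgraph `S` of `G`. It is encoded as a weighting
of all subgraphs of `G`, supported below `S`, so that weightings for different `S` can be added. -/
structure IsFracDecompOn (S : G.Subgraph) (H : SimpleGraph β) (ψ : G.Subgraph → ℝ) : Prop where
  nonneg : ∀ c, 0 ≤ ψ c
  isCopy_of_ne_zero : ∀ c, ψ c ≠ 0 → c.IsCopy H
  le_of_ne_zero : ∀ c, ψ c ≠ 0 → c ≤ S
  finsum_eq_one : ∀ e ∈ S.edgeSet,
    (∑ᶠ c ∈ {c : G.Subgraph | c.IsCopy H ∧ e ∈ c.edgeSet}, ψ c) = 1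

lemma IsFracDecomp.isFracDecompOn_toSubgraph {ψ : K.Subgraph → ℝ} (hψ : IsFracDecomp K H ψ)
    (f : Copy K G) :
    IsFracDecompOn f.toSubgraph H (extend (Subgraph.map f.toHom) ψ 0) := by
  obtain ⟨h_nonneg, h_zero, h_sum⟩ := hψ
  have h_inj : Injective (Subgraph.map f.toHom) := subgraph_map_injective f.injective
  have exists_map_eq : ∀ c, extend (Subgraph.map f.toHom) ψ 0 c ≠ 0 →
      ∃ d, ψ d ≠ 0 ∧ d.map f.toHom = c := fun c hc ↦ (support_extend_zero h_inj).subset hc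
  refine ⟨fun c ↦ extend_nonneg (Pi.le_def.mpr h_nonneg) le_rfl c,
    fun c hc ↦ ?_, fun c hc ↦ ?_, fun e he ↦ ?_⟩
  · obtain ⟨d, hd, rfl⟩ := exists_map_eq c hc
    exact (isCopy_map_iff f).mpr (not_imp_comm.mp (h_zero d) hd)
  · obtain ⟨d, -, rfl⟩ := exists_map_eq c hc
    exact Subgraph.map_mono le_top
  · rw [Subgraph.edgeSet_map, Subgraph.edgeSet_top] at he
    obtain ⟨e', he', rfl⟩ := he
    rw [finsum_mem_extend_zero h_inj, ← h_sum e' he']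
    simp only [Set.preimage_ofPred_eq, isCopy_map_iff, Subgraph.edgeSet_map,
      (Sym2.map.injective f.injective).mem_set_image]

lemma IsFracDecomp.superpose {ψ : G.Subgraph → ℝ} {χ : G.Subgraph → G.Subgraph → ℝ}
    (hψ : IsFracDecomp G K ψ) (hχ : ∀ c, c.IsCopy K → IsFracDecompOn c H (χ c)) :
    IsFracDecomp G H fun x ↦ ∑ᶠ c, ψ c * χ c x := by
  obtain ⟨h_nonneg, h_zero, h_sum⟩ := hψ
  have hχ' : ∀ c, ψ c ≠ 0 → IsFracDecompOn c H (χ c) := fun c hc ↦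
    hχ c (not_imp_comm.mp (h_zero c) hc)
  refine ⟨fun x ↦ finsum_nonneg fun c ↦ ?_, fun x hx ↦ ?_, fun e he ↦ ?_⟩
  · by_cases hc : ψ c = 0
    · simp [hc]
    · exact mul_nonneg (h_nonneg c) ((hχ' c hc).nonneg x)
  · refine finsum_eq_zero_of_forall_eq_zero fun c ↦ by_contra fun h ↦ hx ?_
    exact (hχ' c (left_ne_zero_of_mul h)).isCopy_of_ne_zero x (right_ne_zero_of_mul h)
  · set S : Set G.Subgraph := {x | x.IsCopy H ∧ e ∈ x.edgeSet}
    set T : Set G.Subgraph := {c | c.IsCopy K ∧ e ∈ c.edgeSet}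
    have mem_T : ∀ x ∈ S, ∀ c, ψ c * χ c x ≠ 0 → c ∈ T := fun x hx c h ↦
      have hc := left_ne_zero_of_mul h
      have hxc : x ≤ c := (hχ' c hc).le_of_ne_zero x (right_ne_zero_of_mul h)
      ⟨not_imp_comm.mp (h_zero c) hc, Subgraph.edgeSet_mono hxc hx.2⟩
    have h_sum_copy : ∀ c ∈ T, ∑ᶠ x ∈ S, χ c x = 1 := fun c hc ↦ (hχ c hc.1).finsum_eq_one e hc.2
    exact finsum_mem_finsum_mul_eq_one (h_sum e he) h_sum_copy mem_T

end Copies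

theorem frac_decomposition_trans_general {α β γ : Type*}
    (H : SimpleGraph β) (K : SimpleGraph γ) (G : SimpleGraph α)
    (hGK : ∃ ψ : G.Subgraph → ℝ, IsFracDecomp G K ψ)
    (hKH : ∃ ψ : K.Subgraph → ℝ, IsFracDecomp K H ψ) :
    ∃ ψ : G.Subgraph → ℝ, IsFracDecomp G H ψ := by
  obtain ⟨ψ, hψ⟩ := hGK
  obtain ⟨φ, hφ⟩ := hKH
  have exists_decomp_on_copy : ∀ c : G.Subgraph, c.IsCopy K → ∃ χ, IsFracDecompOn c H χ := by
    intro c hc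
    obtain ⟨f, rfl⟩ := isCopy_iff_exists_toSubgraph_eq.mp hc
    exact ⟨_, hφ.isFracDecompOn_toSubgraph f⟩
  choose! χ hχ using exists_decomp_on_copy
  exact ⟨_, hψ.superpose hχ⟩

/-- If `G` has a fractional `K`-decomposition and `K` has a fractional `H`-decomposition, where
`H` and `K` each have at least one edge, then `G` has a fractional `H`-decomposition. -/
theorem frac_decomposition_trans {α β γ : Type*} [Fintype α] [Fintype β] [Fintype γ]
    (H : SimpleGraph β) (K : SimpleGraph γ) (G : SimpleGraph α)
    (hH : H.edgeSet.Nonempty) (hK : K.edgeSet.Nonempty)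
    (hGK : ∃ ψ : G.Subgraph → ℝ, IsFracDecomp G K ψ)
    (hKH : ∃ ψ : K.Subgraph → ℝ, IsFracDecomp K H ψ) :
    ∃ ψ : G.Subgraph → ℝ, IsFracDecomp G H ψ :=
  frac_decomposition_trans_general H K G hGK hKH
end
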